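/- Let (G_n) be a sequence of connected d-regular simple graphs on n vertices with d = d(n) → ∞ and parameters ε = ε(n) ∈ (0,1) with ε(n)·log d → ∞, satisfying properties P1, P2, P3 and P4. Let t* = n·ln d. Then for any sequence of starting vertices u = u(n) and any t = t(n) with t ≤ (1−ε)t*, there exists a constant c > 0 such that the probability that the subgraph of G_n induced by the vertices not visited by the first t steps of the simple random walk started at u contains a connected component with at least exp(c·d^{ε/2}) vertices tends to 1 as n → ∞. -/

import Mathlib

open Finset Filter

noncomputable section
open scoped Classical

variable {V : Type*} [Fintype V] [DecidableEq V]

/-- Transition matrix of the simple random walk on a `d`-regular graph `G`: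
from `u` the walk moves to a uniformly random neighbour. -/
def simpleStep (G : SimpleGraph V) (d : ℕ) : Matrix V V ℝ :=
  Matrix.of fun u v => if G.Adj u v then ((d : ℝ))⁻¹ else 0

/-- Transition matrix of the lazy random walk `M = (1/2)(I + A/d)`. -/
def lazyStep (G : SimpleGraph V) (d : ℕ) : Matrix V V ℝ :=
  Matrix.of fun u v =>
    (if u = v then (2 : ℝ)⁻¹ else 0) + (2 : ℝ)⁻¹ * (if G.Adj u v then ((d : ℝ))⁻¹ else 0)

/-- Probability that the first `t` steps of the Markov chain with transition
matrix `M` started at `u` form a trajectory satisfying `E`:  the sum, over all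
paths realizing the event, of the product of the transition probabilities. -/
def walkProb (M : Matrix V V ℝ) (u : V) (t : ℕ)
    (E : (Fin (t + 1) → V) → Prop) : ℝ :=
  ∑ p : Fin (t + 1) → V,
    if p 0 = u ∧ E p then ∏ i : Fin t, M (p i.castSucc) (p i.succ) else 0

/-- The mixing time `T = min { t ≥ 1 : |M^t x y - 1/n| ≤ n⁻³ for all x,y }`. -/
def mixingTime (G : SimpleGraph V) (d : ℕ) : ℕ :=
  sInf {T : ℕ | 1 ≤ T ∧ ∀ x y : V,
    |((lazyStep G d) ^ T) x y - ((Fintype.card V : ℝ))⁻¹| ≤ (((Fintype.card V : ℝ)) ^ 3)⁻¹}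

/-- Property P1: the second largest eigenvalue of the lazy walk matrix is at
most `1 - g`, stated via the Rayleigh quotient on the orthogonal complement of
the constant (top) eigenvector. -/
def SpectralGapLB (G : SimpleGraph V) (d : ℕ) (g : ℝ) : Prop :=
  ∀ x : V → ℝ, (∑ v : V, x v) = 0 →
    (∑ u : V, ∑ v : V, x u * lazyStep G d u v * x v) ≤ (1 - g) * ∑ v : V, x v ^ 2

/-- Property P3 with constant `ρ₂`: for vertices `u,v` at distance at most
`d^ε`, the number of neighbours `w` of `v` with `dist w u ≤ dist u v` is at
most `ρ₂ · dist u v`. -/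
def PropP3 (G : SimpleGraph V) (d : ℕ) (ε ρ₂ : ℝ) : Prop :=
  ∀ u v : V, (G.dist u v : ℝ) ≤ (d : ℝ) ^ ε →
    (((univ : Finset V).filter fun w => G.Adj v w ∧ G.dist w u ≤ G.dist u v).card : ℝ) ≤
      ρ₂ * (G.dist u v : ℝ)

/-- The number of edges of `G` with both endpoints in `S`. -/
def edgesInside (G : SimpleGraph V) (S : Finset V) : ℕ :=
  ((S ×ˢ S).filter fun p => G.Adj p.1 p.2).card / 2

/-- The set of vertices of `G` not visited by the trajectory `p` at any step
`s` with `t₀ ≤ s` contains a connected (in the induced subgraph) subset of at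
least `K` vertices; equivalently, the subgraph induced by this vacant set has a
connected component with at least `K` vertices. -/
def bigVacantComponent (G : SimpleGraph V) {t : ℕ} (p : Fin (t + 1) → V)
    (t₀ : ℕ) (K : ℝ) : Prop :=
  ∃ S : Finset V, (∀ v ∈ S, ∀ s : Fin (t + 1), t₀ ≤ (s : ℕ) → p s ≠ v) ∧
    (G.induce (S : Set V)).Connected ∧ K ≤ (S.card : ℝ)


set_option linter.all false

/-! ### Path expectations -/

/-- Weighted sum over paths of length `t` started at `x`. -/
def PE (M : Matrix V V ℝ) (x : V) (t : ℕ) (F : (Fin (t + 1) → V) → ℝ) : ℝ :=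
  ∑ p : Fin (t + 1) → V,
    if p 0 = x then (∏ i : Fin t, M (p i.castSucc) (p i.succ)) * F p else 0

lemma PE_add (M : Matrix V V ℝ) (x : V) (t : ℕ) (F F' : (Fin (t + 1) → V) → ℝ) :
    PE M x t (fun p => F p + F' p) = PE M x t F + PE M x t F' := by
  unfold PE
  rw [← Finset.sum_add_distrib]
  refine Finset.sum_congr rfl fun p _ => ?_
  split_ifs <;> ring

lemma PE_mul (M : Matrix V V ℝ) (x : V) (t : ℕ) (c : ℝ) (F : (Fin (t + 1) → V) → ℝ) :
    PE M x t (fun p => c * F p) = c * PE M x t F := by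
  unfold PE
  rw [Finset.mul_sum]
  refine Finset.sum_congr rfl fun p _ => ?_
  split_ifs <;> ring

lemma PE_sum {ι : Type*} (s : Finset ι) (M : Matrix V V ℝ) (x : V) (t : ℕ)
    (F : ι → (Fin (t + 1) → V) → ℝ) :
    PE M x t (fun p => ∑ i ∈ s, F i p) = ∑ i ∈ s, PE M x t (F i) := by
  unfold PE
  rw [Finset.sum_comm]
  refine Finset.sum_congr rfl fun p _ => ?_
  split_ifs
  · rw [Finset.mul_sum]
  · simp

lemma PE_congr (M : Matrix V V ℝ) (x : V) (t : ℕ) (F F' : (Fin (t + 1) → V) → ℝ)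
    (h : ∀ p, p 0 = x → (∀ i : Fin t, M (p i.castSucc) (p i.succ) ≠ 0) → F p = F' p) :
    PE M x t F = PE M x t F' := by
  unfold PE
  refine Finset.sum_congr rfl fun p _ => ?_
  split_ifs with hp
  · by_cases h0 : ∀ i : Fin t, M (p i.castSucc) (p i.succ) ≠ 0
    · rw [h p hp h0]
    · push Not at h0
      obtain ⟨i, hi⟩ := h0
      rw [Finset.prod_eq_zero (Finset.mem_univ i) hi]; simp
  · rfl

lemma PE_mono (M : Matrix V V ℝ) (hM : ∀ x y, 0 ≤ M x y) (x : V) (t : ℕ)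
    (F F' : (Fin (t + 1) → V) → ℝ)
    (h : ∀ p, p 0 = x → (∀ i : Fin t, M (p i.castSucc) (p i.succ) ≠ 0) → F p ≤ F' p) :
    PE M x t F ≤ PE M x t F' := by
  unfold PE
  refine Finset.sum_le_sum fun p _ => ?_
  split_ifs with hp
  · by_cases h0 : ∀ i : Fin t, M (p i.castSucc) (p i.succ) ≠ 0
    · exact mul_le_mul_of_nonneg_left (h p hp h0) (Finset.prod_nonneg fun i _ => hM _ _)
    · push Not at h0
      obtain ⟨i, hi⟩ := h0
      rw [Finset.prod_eq_zero (Finset.mem_univ i) hi]; simp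
  · rfl

lemma PE_nonneg (M : Matrix V V ℝ) (hM : ∀ x y, 0 ≤ M x y) (x : V) (t : ℕ)
    (F : (Fin (t + 1) → V) → ℝ) (h : ∀ p, 0 ≤ F p) :
    0 ≤ PE M x t F := by
  unfold PE
  refine Finset.sum_nonneg fun p _ => ?_
  split_ifs with hp
  · exact mul_nonneg (Finset.prod_nonneg fun i _ => hM _ _) (h p)
  · rfl

/-- Monotonicity in the kernel. -/
lemma PE_mono_kernel (M M' : Matrix V V ℝ) (hM : ∀ x y, 0 ≤ M x y)
    (hMM : ∀ x y, M x y ≤ M' x y) (x : V) (t : ℕ)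
    (F : (Fin (t + 1) → V) → ℝ) (h : ∀ p, 0 ≤ F p) :
    PE M x t F ≤ PE M' x t F := by
  unfold PE
  refine Finset.sum_le_sum fun p _ => ?_
  split_ifs with hp
  · exact mul_le_mul_of_nonneg_right
      (Finset.prod_le_prod (fun i _ => hM _ _) (fun i _ => hMM _ _)) (h p)
  · rfl

lemma PE_zero (M : Matrix V V ℝ) (x : V) (F : (Fin 1 → V) → ℝ) :
    PE M x 0 F = F (fun _ => x) := by
  unfold PE
  rw [Fintype.sum_eq_single (fun _ => x)]
  · simp
  · intro p hp
    rw [if_neg]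
    intro h
    apply hp
    funext i
    rw [Fin.fin_one_eq_zero i, h]

lemma PE_snoc (M : Matrix V V ℝ) (x : V) (t : ℕ) (F : (Fin (t + 2) → V) → ℝ) :
    PE M x (t + 1) F =
      PE M x t (fun p => ∑ y, M (p (Fin.last t)) y * F (Fin.snoc (α := fun _ => V) p y)) := by
  unfold PE
  rw [← (Fin.snocEquiv (fun _ : Fin (t + 2) => V)).sum_comp, Fintype.sum_prod_type_right]
  refine Finset.sum_congr rfl fun p _ => ?_
  have h0 : ∀ y : V, (Fin.snocEquiv (fun _ : Fin (t + 2) => V)) (y, p) 0 = p 0 := by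
    intro y
    have := Fin.snoc_castSucc (α := fun _ => V) y p 0
    simpa [Fin.snocEquiv] using this
  have h1 : ∀ y : V, (Fin.snocEquiv (fun _ : Fin (t + 2) => V)) (y, p)
      = Fin.snoc (α := fun _ => V) p y := fun y => rfl
  simp only [h0]
  split_ifs with h
  · rw [Finset.mul_sum]
    refine Finset.sum_congr rfl fun y _ => ?_
    rw [h1, Fin.prod_univ_castSucc]
    have h2 : ∀ i : Fin t, (Fin.snoc (α := fun _ => V) p y : Fin (t + 2) → V) i.castSucc.succ
        = p i.succ := by
      intro i
      rw [Fin.succ_castSucc, Fin.snoc_castSucc]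
    simp only [h2, Fin.snoc_castSucc, Fin.succ_last, Fin.snoc_last]
    ring
  · simp

lemma PE_cons (M : Matrix V V ℝ) (x : V) (t : ℕ) (F : (Fin (t + 2) → V) → ℝ) :
    PE M x (t + 1) F =
      ∑ y, M x y * PE M y t (fun p => F (Fin.cons (α := fun _ => V) x p)) := by
  unfold PE
  rw [← (Fin.consEquiv (fun _ : Fin (t + 2) => V)).sum_comp, Fintype.sum_prod_type]
  have h1 : ∀ (y : V) (p : Fin (t + 1) → V), (Fin.consEquiv (fun _ : Fin (t + 2) => V)) (y, p)
      = Fin.cons (α := fun _ => V) y p := fun y p => rfl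
  simp only [h1, Fin.cons_zero]
  rw [Fintype.sum_eq_single x]
  · simp only [if_true]
    have : ∀ y, M x y * (∑ p : Fin (t + 1) → V, if p 0 = y then
        (∏ i : Fin t, M (p i.castSucc) (p i.succ)) * F (Fin.cons (α := fun _ => V) x p) else 0)
        = ∑ p : Fin (t + 1) → V, if p 0 = y then M x y *
        ((∏ i : Fin t, M (p i.castSucc) (p i.succ)) * F (Fin.cons (α := fun _ => V) x p)) else 0 := by
      intro y
      rw [Finset.mul_sum]
      refine Finset.sum_congr rfl fun p _ => ?_
      split_ifs <;> simp
    simp only [this]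
    rw [Finset.sum_comm]
    refine Finset.sum_congr rfl fun p _ => ?_
    rw [Finset.sum_ite_eq]
    simp only [Finset.mem_univ, if_true]
    rw [Fin.prod_univ_succ]
    simp only [Fin.castSucc_zero, Fin.cons_zero, Fin.cons_succ]
    have h2 : ∀ i : Fin t, (Fin.cons (α := fun _ => V) x p : Fin (t + 2) → V) i.succ.castSucc
        = p i.castSucc := by
      intro i
      rw [← Fin.succ_castSucc, Fin.cons_succ]
    simp only [h2]
    ring
  · intro y hy
    simp [hy]

lemma walkProb_eq (M : Matrix V V ℝ) (x : V) (t : ℕ) (E : (Fin (t + 1) → V) → Prop) :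
    walkProb M x t E = PE M x t (fun p => if E p then 1 else 0) := by
  unfold walkProb PE
  refine Finset.sum_congr rfl fun p _ => ?_
  by_cases h : p 0 = x <;> by_cases h' : E p <;> simp [h, h']

lemma PE_one (M : Matrix V V ℝ) (hM : ∀ x, ∑ y, M x y = 1) (t : ℕ) (x : V) :
    PE M x t (fun _ => 1) = 1 := by
  induction t generalizing x with
  | zero => rw [PE_zero]
  | succ t ih =>
    rw [PE_cons]
    simp [ih, hM]

/-! ### Symmetric stochastic matrices -/

/-- Symmetric stochastic matrices. -/
structure SymStoch (P : Matrix V V ℝ) : Prop where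
  symm : ∀ x y, P x y = P y x
  nonneg : ∀ x y, 0 ≤ P x y
  rowsum : ∀ x, ∑ y, P x y = 1

/-- inner product -/
def ip (f g : V → ℝ) : ℝ := ∑ x, f x * g x

/-- action on functions -/
def op (P : Matrix V V ℝ) (f : V → ℝ) : V → ℝ := fun x => ∑ y, P x y * f y

lemma ip_comm (f g : V → ℝ) : ip f g = ip g f := by
  unfold ip; exact Finset.sum_congr rfl fun x _ => mul_comm _ _

lemma ip_self_nonneg (f : V → ℝ) : 0 ≤ ip f f :=
  Finset.sum_nonneg fun x _ => mul_self_nonneg _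

lemma ip_add_left (f g h : V → ℝ) : ip (fun x => f x + g x) h = ip f h + ip g h := by
  unfold ip; rw [← Finset.sum_add_distrib]; exact Finset.sum_congr rfl fun x _ => by ring

lemma ip_sub_left (f g h : V → ℝ) : ip (fun x => f x - g x) h = ip f h - ip g h := by
  unfold ip; rw [← Finset.sum_sub_distrib]; exact Finset.sum_congr rfl fun x _ => by ring

lemma ip_add_right (f g h : V → ℝ) : ip h (fun x => f x + g x) = ip h f + ip h g := by
  unfold ip; rw [← Finset.sum_add_distrib]; exact Finset.sum_congr rfl fun x _ => by ring

lemma ip_sub_right (f g h : V → ℝ) : ip h (fun x => f x - g x) = ip h f - ip h g := by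
  unfold ip; rw [← Finset.sum_sub_distrib]; exact Finset.sum_congr rfl fun x _ => by ring

lemma ip_mul_left (c : ℝ) (f g : V → ℝ) : ip (fun x => c * f x) g = c * ip f g := by
  unfold ip; rw [Finset.mul_sum]; exact Finset.sum_congr rfl fun x _ => by ring

lemma ip_mul_right (c : ℝ) (f g : V → ℝ) : ip f (fun x => c * g x) = c * ip f g := by
  unfold ip; rw [Finset.mul_sum]; exact Finset.sum_congr rfl fun x _ => by ring

lemma ip_sum_right {ι : Type*} (s : Finset ι) (f : V → ℝ) (g : ι → V → ℝ) :
    ip f (fun x => ∑ i ∈ s, g i x) = ∑ i ∈ s, ip f (g i) := by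
  unfold ip; rw [Finset.sum_comm]; exact Finset.sum_congr rfl fun x _ => by rw [Finset.mul_sum]

lemma ip_sum_left {ι : Type*} (s : Finset ι) (f : V → ℝ) (g : ι → V → ℝ) :
    ip (fun x => ∑ i ∈ s, g i x) f = ∑ i ∈ s, ip (g i) f := by
  rw [ip_comm, ip_sum_right]; exact Finset.sum_congr rfl fun x _ => ip_comm _ _

lemma ip_mono (f g f' g' : V → ℝ) (h1 : ∀ x, f x ≤ f' x) (h2 : ∀ x, g x ≤ g' x)
    (h3 : ∀ x, 0 ≤ g x) (h4 : ∀ x, 0 ≤ f' x) : ip f g ≤ ip f' g' :=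
  Finset.sum_le_sum fun x _ => mul_le_mul (h1 x) (h2 x) (h3 x) (h4 x)

lemma ip_cs (f g : V → ℝ) : ip f g ^ 2 ≤ ip f f * ip g g := by
  have := Finset.sum_mul_sq_le_sq_mul_sq Finset.univ f g
  simpa [ip, sq] using this

lemma op_add (P : Matrix V V ℝ) (f g : V → ℝ) :
    op P (fun x => f x + g x) = fun x => op P f x + op P g x := by
  funext x; unfold op; rw [← Finset.sum_add_distrib]; exact Finset.sum_congr rfl fun x _ => by ring

lemma op_sub (P : Matrix V V ℝ) (f g : V → ℝ) :
    op P (fun x => f x - g x) = fun x => op P f x - op P g x := by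
  funext x; unfold op; rw [← Finset.sum_sub_distrib]; exact Finset.sum_congr rfl fun x _ => by ring

lemma op_mul (P : Matrix V V ℝ) (c : ℝ) (f : V → ℝ) :
    op P (fun x => c * f x) = fun x => c * op P f x := by
  funext x; unfold op; rw [Finset.mul_sum]; exact Finset.sum_congr rfl fun x _ => by ring

lemma op_sum {ι : Type*} (s : Finset ι) (P : Matrix V V ℝ) (g : ι → V → ℝ) :
    op P (fun x => ∑ i ∈ s, g i x) = fun x => ∑ i ∈ s, op P (g i) x := by
  funext x; unfold op; rw [Finset.sum_comm]
  exact Finset.sum_congr rfl fun x _ => by rw [Finset.mul_sum]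

lemma op_one (f : V → ℝ) : op (1 : Matrix V V ℝ) f = f := by
  funext x; unfold op; simp [Matrix.one_apply]

lemma op_matmul (P Q : Matrix V V ℝ) (f : V → ℝ) : op (P * Q) f = op P (op Q f) := by
  funext x; unfold op
  simp only [Matrix.mul_apply, Finset.sum_mul, Finset.mul_sum]
  rw [Finset.sum_comm]
  exact Finset.sum_congr rfl fun x _ => Finset.sum_congr rfl fun y _ => by ring

namespace SymStoch
variable {P : Matrix V V ℝ}

lemma sd (hP : SymStoch P) (f g : V → ℝ) : ip f (op P g) = ip (op P f) g := by
  unfold ip op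
  simp only [Finset.sum_mul, Finset.mul_sum]
  rw [Finset.sum_comm]
  exact Finset.sum_congr rfl fun x _ => Finset.sum_congr rfl fun y _ => by
    rw [hP.symm x y]; ring

lemma op_mono (hP : SymStoch P) {f g : V → ℝ} (h : ∀ x, f x ≤ g x) (x : V) :
    op P f x ≤ op P g x :=
  Finset.sum_le_sum fun y _ => mul_le_mul_of_nonneg_left (h y) (hP.nonneg x y)

lemma op_nonneg (hP : SymStoch P) {f : V → ℝ} (h : ∀ x, 0 ≤ f x) (x : V) :
    0 ≤ op P f x :=
  Finset.sum_nonneg fun y _ => mul_nonneg (hP.nonneg x y) (h y)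

lemma op_const (hP : SymStoch P) (c : ℝ) : op P (fun _ => c) = fun _ => c := by
  funext x; unfold op; rw [← Finset.sum_mul, hP.rowsum, one_mul]

lemma sum_op (hP : SymStoch P) (f : V → ℝ) : ∑ x, op P f x = ∑ x, f x := by
  have := hP.sd (fun _ => 1) f
  rw [hP.op_const] at this
  simpa [ip] using this

lemma one : SymStoch (1 : Matrix V V ℝ) where
  symm x y := by simp [Matrix.one_apply, eq_comm]
  nonneg x y := by rw [Matrix.one_apply]; split_ifs <;> norm_num
  rowsum x := by simp [Matrix.one_apply]

lemma pow (hP : SymStoch P) (k : ℕ) : SymStoch (P ^ k) := by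
  have hT : P.transpose = P := by ext x y; exact hP.symm y x
  induction k with
  | zero => simpa using one
  | succ k ih =>
    refine ⟨fun x y => ?_, fun x y => ?_, fun x => ?_⟩
    · have : (P ^ (k+1)).transpose = P ^ (k+1) := by rw [Matrix.transpose_pow, hT]
      exact congrFun (congrFun this y) x
    · rw [pow_succ, Matrix.mul_apply]
      exact Finset.sum_nonneg fun z _ => mul_nonneg (ih.nonneg _ _) (hP.nonneg _ _)
    · have := congrFun (op_matmul (P^k) P (fun _ => 1)) x
      rw [hP.op_const, ih.op_const, ← pow_succ] at this
      simpa [op] using this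

lemma lazy (hP : SymStoch P) : SymStoch ((2:ℝ)⁻¹ • (1 + P)) where
  symm x y := by simp [Matrix.one_apply, hP.symm x y, eq_comm]
  nonneg x y := by
    have := (one (V := V)).nonneg x y
    have := hP.nonneg x y
    simp only [Matrix.smul_apply, Matrix.add_apply, smul_eq_mul]; positivity
  rowsum x := by
    simp only [Matrix.smul_apply, Matrix.add_apply, smul_eq_mul]
    rw [← Finset.mul_sum, Finset.sum_add_distrib, hP.rowsum, (one (V := V)).rowsum]; norm_num

lemma op_lazy (f : V → ℝ) (x : V) :
    op ((2:ℝ)⁻¹ • (1 + P)) f x = (f x + op P f x) / 2 := by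
  have : op ((2:ℝ)⁻¹ • (1 + P)) f x = (2:ℝ)⁻¹ * (op 1 f x + op P f x) := by
    unfold op
    rw [← Finset.sum_add_distrib, Finset.mul_sum]
    refine Finset.sum_congr rfl fun y _ => ?_
    simp only [Matrix.smul_apply, Matrix.add_apply, smul_eq_mul]; ring
  rw [this, op_one]; ring

lemma norm_op_le (hP : SymStoch P) (f : V → ℝ) : ip (op P f) (op P f) ≤ ip f f := by
  have h1 : ∀ x, op P f x * op P f x ≤ op P (fun y => f y * f y) x := by
    intro x
    have := Finset.sum_sq_le_sum_mul_sum_of_sq_le_mul Finset.univ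
      (r := fun y => P x y * f y) (f := fun y => P x y) (g := fun y => P x y * (f y * f y))
      (fun y _ => hP.nonneg x y) (fun y _ => mul_nonneg (hP.nonneg x y) (mul_self_nonneg _))
      (fun y _ => le_of_eq (by ring))
    rw [hP.rowsum, one_mul] at this
    unfold op; nlinarith [this]
  calc ip (op P f) (op P f) ≤ ∑ x, op P (fun y => f y * f y) x := Finset.sum_le_sum fun x _ => h1 x
    _ = ip f f := hP.sum_op _

/-- Dirichlet form is nonnegative. -/
lemma dir_nonneg (hP : SymStoch P) (f : V → ℝ) : 0 ≤ ip f f - ip f (op P f) := by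
  have h1 := ip_cs f (op P f)
  have h2 := hP.norm_op_le f
  have h3 := ip_self_nonneg f
  have h4 := ip_self_nonneg (op P f)
  by_contra hcon
  nlinarith

/-- Cauchy-Schwarz for the Dirichlet form. -/
lemma dir_cs (hP : SymStoch P) (f g : V → ℝ) :
    (ip f g - ip f (op P g)) ^ 2 ≤ (ip f f - ip f (op P f)) * (ip g g - ip g (op P g)) := by
  set a := ip f f - ip f (op P f) with ha
  set c := ip g g - ip g (op P g) with hc
  set b := ip f g - ip f (op P g) with hb
  have key : ∀ s : ℝ, 0 ≤ c * (s * s) + (2 * b) * s + a := by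
    intro s
    have := hP.dir_nonneg (fun x => f x + s * g x)
    rw [op_add P f (fun x => s * g x), op_mul] at this
    simp only [ip_add_left, ip_add_right, ip_mul_left, ip_mul_right] at this
    have e1 : ip g f = ip f g := ip_comm _ _
    have e2 : ip g (op P f) = ip f (op P g) := by rw [hP.sd, ip_comm]
    rw [e1, e2] at this
    rw [ha, hb, hc]; nlinarith [this]
  have := discrim_le_zero key
  unfold discrim at this
  nlinarith

end SymStoch

/-! ### Gap hypotheses -/

/-- spectral gap of the form `I - P` on mean-zero functions. -/
def Gap (P : Matrix V V ℝ) (γ : ℝ) : Prop :=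
  ∀ x : V → ℝ, ∑ v, x v = 0 → γ * ip x x ≤ ip x x - ip x (op P x)

/-- lazy version -/
def lzm (P : Matrix V V ℝ) : Matrix V V ℝ := (2:ℝ)⁻¹ • (1 + P)

lemma SymStoch.lzm {P : Matrix V V ℝ} (hP : SymStoch P) : SymStoch (lzm P) := hP.lazy

lemma lzm_contract {P : Matrix V V ℝ} (hP : SymStoch P) {γ : ℝ} (hg : Gap P γ)
    (f : V → ℝ) (hf : ∑ v, f v = 0) (L : ℕ) :
    ip (op (lzm P ^ L) f) (op (lzm P ^ L) f) ≤ Real.exp (-(γ / 2) * L) * ip f f := by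
  induction L with
  | zero => simp [op_one]
  | succ L ih =>
    set h := op (lzm P ^ L) f with hh
    have hsum : ∑ v, h v = 0 := by rw [hh, (hP.lzm.pow L).sum_op, hf]
    have h1 : op (lzm P ^ (L+1)) f = fun x => (2:ℝ)⁻¹ * (h x + op P h x) := by
      funext x
      rw [pow_succ', op_matmul, ← hh]
      unfold lzm; rw [SymStoch.op_lazy]; ring
    rw [h1, ip_mul_left, ip_mul_right]
    simp only [ip_add_left, ip_add_right]
    have e1 : ip (op P h) h = ip h (op P h) := ip_comm _ _
    have h2 := hP.norm_op_le h
    have h3 := hg h hsum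
    have h4 : (1 - γ/2) ≤ Real.exp (-(γ/2)) := by
      have := Real.add_one_le_exp (-(γ/2)); linarith
    have h5 : Real.exp (-(γ / 2) * ((L+1 : ℕ) : ℝ)) = Real.exp (-(γ/2)) * Real.exp (-(γ / 2) * L) := by
      rw [← Real.exp_add]; congr 1; push_cast; ring
    rw [h5, e1]
    have h6 : (1 - γ/2) * ip h h ≤ Real.exp (-(γ/2)) * ip h h :=
      mul_le_mul_of_nonneg_right h4 (ip_self_nonneg _)
    have h7 : Real.exp (-(γ/2)) * ip h h ≤ Real.exp (-(γ/2)) * (Real.exp (-(γ / 2) * L) * ip f f) :=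
      mul_le_mul_of_nonneg_left ih (Real.exp_pos _).le
    nlinarith

lemma lzm_mix {P : Matrix V V ℝ} (hP : SymStoch P) {γ : ℝ} (hg : Gap P γ)
    [Nonempty V] (f : V → ℝ) (β : ℝ) (hβ : 0 ≤ β)
    (hf : ip f f ≤ Fintype.card V * β ^ 2) (L : ℕ)
    (hL : (Fintype.card V : ℝ) ^ 3 ≤ Real.exp ((γ / 2) * L)) (x : V) :
    |op (lzm P ^ L) f x - (∑ y, f y) / Fintype.card V| ≤ β / Fintype.card V := by
  set N : ℝ := (Fintype.card V : ℝ) with hN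
  have hNpos : 0 < N := by rw [hN]; exact_mod_cast Fintype.card_pos
  set a := (∑ y, f y) / N with ha
  set h : V → ℝ := fun y => f y - a with hh
  have hsum : ∑ v, h v = 0 := by
    simp only [hh, Finset.sum_sub_distrib, Finset.sum_const, Finset.card_univ, nsmul_eq_mul]
    rw [← hN, ha]; field_simp; ring
  have hhf : ip h h ≤ ip f f := by
    have : ip f f = ip h h + N * a^2 := by
      have e : f = fun y => h y + a := by funext y; simp [hh]
      rw [e]
      simp only [ip_add_left, ip_add_right]
      have e1 : ip h (fun _ => a) = 0 := by unfold ip; rw [← Finset.sum_mul, hsum, zero_mul]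
      have e2 : ip (fun _ => a) h = 0 := by rw [ip_comm, e1]
      have e3 : ip (fun _ : V => a) (fun _ => a) = N * a^2 := by
        unfold ip; simp [hN]; ring
      rw [e1, e2, e3]; ring
    nlinarith [mul_nonneg hNpos.le (sq_nonneg a)]
  have hop : op (lzm P ^ L) h x = op (lzm P ^ L) f x - a := by
    rw [hh, op_sub]
    beta_reduce
    have := congrFun ((hP.lzm.pow L).op_const a) x
    rw [this]
  rw [← hop]
  have hc := lzm_contract hP hg h hsum L
  have hx : (op (lzm P ^ L) h x)^2 ≤ ip (op (lzm P ^ L) h) (op (lzm P ^ L) h) := by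
    rw [sq]
    exact Finset.single_le_sum (f := fun y => op (lzm P ^ L) h y * op (lzm P ^ L) h y)
      (fun y _ => mul_self_nonneg _) (Finset.mem_univ x)
  have he : Real.exp (-(γ / 2) * L) ≤ 1 / N^3 := by
    rw [neg_mul, Real.exp_neg, inv_eq_one_div]
    exact one_div_le_one_div_of_le (by positivity) hL
  have hfin : (op (lzm P ^ L) h x)^2 ≤ (β / N)^2 := by
    calc (op (lzm P ^ L) h x)^2 ≤ Real.exp (-(γ / 2) * L) * ip h h := hx.trans hc
      _ ≤ 1 / N^3 * (N * β^2) := mul_le_mul he (hhf.trans hf) (ip_self_nonneg _) (by positivity)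
      _ = (β/N)^2 := by field_simp
  exact abs_le_of_sq_le_sq hfin (by positivity)

/-! ### Avoidance probabilities -/

/-- indicator function of a set -/
def ind (S : Finset V) : V → ℝ := fun x => if x ∈ S then 1 else 0

/-- `fS P S t x` is the probability that the chain started at `x` avoids `S` at times `0..t`. -/
def fS (P : Matrix V V ℝ) (S : Finset V) : ℕ → V → ℝ
  | 0 => fun x => if x ∈ S then 0 else 1
  | (t+1) => fun x => if x ∈ S then 0 else op P (fS P S t) x

lemma fS_succ (P : Matrix V V ℝ) (S : Finset V) (t : ℕ) (x : V) :
    fS P S (t+1) x = if x ∈ S then 0 else op P (fS P S t) x := rfl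

lemma fS_PE (P : Matrix V V ℝ) (S : Finset V) (t : ℕ) (x : V) :
    PE P x t (fun p => if ∀ s, p s ∉ S then 1 else 0) = fS P S t x := by
  induction t generalizing x with
  | zero =>
    rw [PE_zero]
    by_cases h : x ∈ S <;> simp [fS, h]
  | succ t ih =>
    rw [PE_cons]
    simp only [fS]
    by_cases h : x ∈ S
    · rw [if_pos h]
      apply Finset.sum_eq_zero
      intro y _
      have : (fun p : Fin (t+1) → V => if ∀ s, (Fin.cons (α := fun _ => V) x p : Fin (t+2) → V) s ∉ S
          then (1:ℝ) else 0) = fun p => 0 * 0 := by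
        funext p
        rw [if_neg]
        · simp
        · intro h'
          exact h' 0 (by simpa using h)
      rw [this, PE_mul]; simp
    · rw [if_neg h]
      unfold op
      refine Finset.sum_congr rfl fun y _ => ?_
      rw [← ih]
      congr 2
      funext p
      congr 1
      rw [Fin.forall_fin_succ]
      simp [h]

section
variable {P : Matrix V V ℝ}

lemma fS_nonneg (hP : SymStoch P) (S : Finset V) (t : ℕ) (x : V) : 0 ≤ fS P S t x := by
  induction t generalizing x with
  | zero => simp only [fS]; split_ifs <;> norm_num
  | succ t ih =>
    simp only [fS]; split_ifs
    · rfl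
    · exact hP.op_nonneg ih x

lemma fS_on (S : Finset V) (t : ℕ) {x : V} (hx : x ∈ S) : fS P S t x = 0 := by
  cases t <;> simp [fS, hx]

lemma fS_le_one (hP : SymStoch P) (S : Finset V) (t : ℕ) (x : V) : fS P S t x ≤ 1 := by
  induction t generalizing x with
  | zero => simp only [fS]; split_ifs <;> norm_num
  | succ t ih =>
    simp only [fS]; split_ifs
    · norm_num
    · have := hP.op_mono (g := fun _ => 1) ih x
      rwa [hP.op_const] at this

lemma fS_succ_le (hP : SymStoch P) (S : Finset V) (t : ℕ) (x : V) :
    fS P S (t+1) x ≤ fS P S t x := by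
  induction t generalizing x with
  | zero =>
    by_cases h : x ∈ S
    · rw [fS_on _ _ h, fS_on _ _ h]
    · have := fS_le_one hP S 1 x
      simpa [fS, h] using this
  | succ t ih =>
    rw [fS_succ, fS_succ]
    split_ifs
    · rfl
    · exact hP.op_mono ih x

lemma fS_succ_le_op (hP : SymStoch P) (S : Finset V) (t : ℕ) (x : V) :
    fS P S (t+1) x ≤ op P (fS P S t) x := by
  rw [fS_succ]; split_ifs
  · exact hP.op_nonneg (fS_nonneg hP S t) x
  · rfl

lemma fS_anti (hP : SymStoch P) (S : Finset V) (x : V) : Antitone (fun t => fS P S t x) :=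
  antitone_nat_of_succ_le fun t => fS_succ_le hP S t x

lemma fS_le_lazy (hP : SymStoch P) (S : Finset V) (t L : ℕ) (x : V) :
    fS P S (t+L) x ≤ op (lzm P ^ L) (fS P S t) x := by
  induction L generalizing x with
  | zero => simp [op_one]
  | succ L ih =>
    rw [pow_succ', op_matmul]
    have h1 := hP.lzm.op_mono ih x
    refine le_trans ?_ h1
    unfold lzm; rw [SymStoch.op_lazy]
    have h2 := fS_succ_le hP S (t+L) x
    have h3 := fS_succ_le_op hP S (t+L) x
    rw [← add_assoc]; linarith

lemma fS_ge_lazy (hP : SymStoch P) (S : Finset V) (t L : ℕ) (F : ℝ) (hF : ∀ x, fS P S t x ≤ F)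
    (x : V) :
    op (lzm P ^ L) (fS P S t) x ≤ fS P S t x + F * ∑ i ∈ Finset.range L, op (lzm P ^ i) (ind S) x := by
  have hF0 : 0 ≤ F := (fS_nonneg hP S t x).trans (hF x)
  induction L with
  | zero => simp [op_one]
  | succ L ih =>
    rw [pow_succ, op_matmul, Finset.sum_range_succ]
    have h1 : ∀ y, op (lzm P) (fS P S t) y ≤ fS P S t y + F * ind S y := by
      intro y
      unfold lzm; rw [SymStoch.op_lazy]
      by_cases hy : y ∈ S
      · rw [fS_on _ _ hy]
        have := hP.op_mono hF y
        rw [hP.op_const] at this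
        simp only [ind, hy, if_true]; linarith
      · have h2 := fS_succ_le hP S t y
        rw [fS_succ, if_neg hy] at h2
        simp only [ind, hy, if_false]; linarith
    have h2 := (hP.lzm.pow L).op_mono h1 x
    rw [op_add _ _ (fun y => F * ind S y), op_mul] at h2
    linarith

lemma fS_shift (hP : SymStoch P) (S : Finset V) (i j : ℕ) :
    ip (fS P S (i+1)) (fS P S j) = ip (fS P S i) (fS P S (j+1)) := by
  have key : ∀ i j, ip (fS P S (i+1)) (fS P S j) = ip (op P (fS P S i)) (fS P S j) := by
    intro i j
    unfold ip
    refine Finset.sum_congr rfl fun x _ => ?_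
    by_cases hx : x ∈ S
    · rw [fS_on S j hx]; ring
    · rw [fS_succ, if_neg hx]
  rw [key, ip_comm (fS P S i), key, ← hP.sd, ip_comm]

lemma fS_ip (hP : SymStoch P) (S : Finset V) (i j : ℕ) :
    ip (fS P S i) (fS P S j) = ∑ x, fS P S (i+j) x := by
  induction i generalizing j with
  | zero =>
    unfold ip
    refine Finset.sum_congr rfl fun x _ => ?_
    by_cases hx : x ∈ S
    · rw [fS_on S j hx, fS_on S (0+j) hx]; ring
    · simp [fS, hx]
  | succ i ih => rw [fS_shift hP, ih]; congr 1; funext x; congr 1; ring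

lemma fS_norm (hP : SymStoch P) (S : Finset V) (κ : ℝ)
    (hκ : ∀ g : V → ℝ, (∀ x ∈ S, g x = 0) → κ * ip g g ≤ ip g g - ip g (op P g)) (t : ℕ) :
    ip (fS P S t) (fS P S t) ≤ Fintype.card V * (Real.exp (-κ * t)) ^ 2 := by
  have hupp : ∀ g : V → ℝ, (∀ x ∈ S, g x = 0) → ip g (op P g) ≤ Real.exp (-κ) * ip g g := by
    intro g hg
    have h1 := hκ g hg
    have h2 := Real.add_one_le_exp (-κ)
    nlinarith [ip_self_nonneg g, mul_le_mul_of_nonneg_right h2 (ip_self_nonneg g)]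
  have hlow : ∀ g : V → ℝ, (∀ x ∈ S, g x = 0) → -(Real.exp (-κ) * ip g g) ≤ ip g (op P g) := by
    intro g hg
    have h1 := hupp (fun x => |g x|) (fun x hx => by simp [hg x hx])
    have h2 : ip (fun x => |g x|) (fun x => |g x|) = ip g g := by
      unfold ip; exact Finset.sum_congr rfl fun x _ => by rw [abs_mul_abs_self]
    have h3 : -ip g (op P g) ≤ ip (fun x => |g x|) (op P (fun x => |g x|)) := by
      unfold ip op
      simp only [Finset.mul_sum, ← Finset.sum_neg_distrib]
      refine Finset.sum_le_sum fun x _ => Finset.sum_le_sum fun y _ => ?_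
      have e : |g x| * (P x y * |g y|) = |g x * (P x y * g y)| := by
        rw [abs_mul, abs_mul, abs_of_nonneg (hP.nonneg x y)]
      rw [e]; exact neg_le_abs _
    rw [h2] at h1; linarith
  set θ := Real.exp (-κ) with hθ
  have hθ0 : 0 < θ := Real.exp_pos _
  have step : ∀ t, ip (fS P S (t+1)) (fS P S (t+1)) ≤ θ^2 * ip (fS P S t) (fS P S t) := by
    intro t
    set f := fS P S t with hf
    set y := fS P S (t+1) with hy
    have e1 : ip y (op P f) = ip y y := by
      unfold ip
      refine Finset.sum_congr rfl fun x _ => ?_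
      by_cases hx : x ∈ S
      · rw [hy, fS_on _ _ hx]; ring
      · congr 1; rw [hy, fS_succ, if_neg hx]
    have e2 : ip f (op P y) = ip y y := by rw [hP.sd, ip_comm, e1]
    have a1 := hupp (fun x => θ⁻¹ * y x + f x) (fun x hx => by
      simp [hf, hy, fS_on _ _ hx])
    have a2 := hlow (fun x => θ⁻¹ * y x - f x) (fun x hx => by
      simp [hf, hy, fS_on _ _ hx])
    rw [op_add P (fun x => θ⁻¹ * y x) f, op_mul] at a1
    rw [op_sub P (fun x => θ⁻¹ * y x) f, op_mul] at a2
    simp only [ip_add_left, ip_add_right, ip_sub_left, ip_sub_right, ip_mul_left, ip_mul_right] at a1 a2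
    rw [e1, e2] at a1 a2
    have e3 : ip f y = ip y f := ip_comm _ _
    rw [e3] at a1 a2
    have e4 : 4 * (θ⁻¹ * ip y y) ≤ 2 * (θ * (θ⁻¹ * (θ⁻¹ * ip y y)) + θ * ip f f) := by nlinarith
    have e5 : θ * (θ⁻¹ * (θ⁻¹ * ip y y)) = θ⁻¹ * ip y y := by field_simp
    rw [e5] at e4
    have e6 : θ⁻¹ * ip y y ≤ θ * ip f f := by linarith
    have e7 := mul_le_mul_of_nonneg_left e6 hθ0.le
    rw [← mul_assoc, mul_inv_cancel₀ hθ0.ne', one_mul] at e7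
    nlinarith
  induction t with
  | zero =>
    simp only [Nat.cast_zero, mul_zero, Real.exp_zero, one_pow, mul_one]
    unfold ip
    calc ∑ x, fS P S 0 x * fS P S 0 x ≤ ∑ x : V, (1:ℝ) := Finset.sum_le_sum fun x _ => by
          have := fS_le_one hP S 0 x; have := fS_nonneg hP S 0 x; nlinarith
      _ = _ := by simp
  | succ t ih =>
    refine (step t).trans ?_
    have : Real.exp (-κ * ((t+1 : ℕ) : ℝ)) = θ * Real.exp (-κ * t) := by
      rw [hθ, ← Real.exp_add]; congr 1; push_cast; ring
    rw [this, mul_pow]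
    nlinarith [mul_le_mul_of_nonneg_left ih (sq_nonneg θ)]

lemma sum_fS_zero (S : Finset V) : ∑ x, fS P S 0 x = (Fintype.card V : ℝ) - S.card := by
  have : ∀ x, fS P S 0 x = 1 - ind S x := by
    intro x; by_cases h : x ∈ S <;> simp [fS, ind, h]
  simp only [this, Finset.sum_sub_distrib]
  simp [ind]

lemma sum_fS_one (hP : SymStoch P) (S : Finset V) :
    (Fintype.card V : ℝ) - 2 * S.card ≤ ∑ x, fS P S 1 x := by
  have h1 : ∀ x, op P (fS P S 0) x - ind S x ≤ fS P S 1 x := by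
    intro x
    by_cases h : x ∈ S
    · have := hP.op_mono (g := fun _ => 1) (fS_le_one hP S 0) x
      rw [hP.op_const] at this
      simp [fS, ind, h]; simpa [fS] using this
    · simp [fS, ind, h]
  have h2 := Finset.sum_le_sum (s := Finset.univ) fun x _ => h1 x
  rw [Finset.sum_sub_distrib, hP.sum_op, sum_fS_zero] at h2
  have : ∑ x, ind S x = S.card := by simp [ind]
  rw [this] at h2
  linarith

/-- Lower bound for the stationary avoidance probability. -/
lemma fS_avg_lower (hP : SymStoch P) (S : Finset V) (t : ℕ)
    (hS : 2 * (S.card : ℝ) < Fintype.card V) :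
    ((Fintype.card V : ℝ) - S.card) *
      (1 - S.card / ((Fintype.card V : ℝ) - S.card)) ^ (t+1) ≤ ∑ x, fS P S t x := by
  set b : ℕ → ℝ := fun j => ∑ x, fS P S j x with hb
  set N : ℝ := (Fintype.card V : ℝ)
  set k : ℝ := (S.card : ℝ)
  have hk : 0 ≤ k := Nat.cast_nonneg _
  have hb0 : b 0 = N - k := sum_fS_zero S
  have hb1 : N - 2 * k ≤ b 1 := sum_fS_one hP S
  have hNk : 0 < N - k := by linarith
  have hcs : ∀ i j, b (i+j) ^ 2 ≤ b (i+i) * b (j+j) := by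
    intro i j
    have := ip_cs (fS P S i) (fS P S j)
    rwa [fS_ip hP, fS_ip hP, fS_ip hP] at this
  set c : ℝ := 1 - k / (N - k) with hc
  have hc' : c = (N - 2 * k) / (N - k) := by rw [hc]; field_simp; ring
  have hc0 : 0 < c := by rw [hc']; exact div_pos (by linarith) hNk
  have hc1 : c ≤ 1 := by rw [hc]; have := div_nonneg hk hNk.le; linarith
  have hcb : c * b 0 ≤ b 1 := by
    rw [hb0, hc', div_mul_cancel₀ _ hNk.ne']; exact hb1
  have main : ∀ m, 0 < b (2*m) ∧ c^2 * b (2*m) ≤ b (2*m+2) := by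
    intro m
    induction m with
    | zero =>
      have h0 : 0 < b 0 := by rw [hb0]; exact hNk
      refine ⟨h0, ?_⟩
      have := hcs 0 1
      simp only [Nat.zero_add, Nat.add_zero] at this
      simp only [Nat.mul_zero, Nat.zero_add]
      have h3 : (c * b 0)^2 ≤ b 0 * b (1+1) := le_trans (pow_le_pow_left₀ (by positivity) hcb 2) this
      have h4 : b 0 * (c^2 * b 0) ≤ b 0 * b 2 := by
        have : b (1+1) = b 2 := rfl
        rw [this] at h3; nlinarith
      exact le_of_mul_le_mul_left h4 h0
    | succ m ih =>
      obtain ⟨h0, h1⟩ := ih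
      have h2 : 0 < b (2*(m+1)) := by
        have : 2*(m+1) = 2*m+2 := by ring
        rw [this]; exact lt_of_lt_of_le (by positivity) h1
      refine ⟨h2, ?_⟩
      have := hcs m (m+2)
      have e1 : m + (m+2) = 2*(m+1) := by ring
      have e2 : m + m = 2*m := by ring
      have e3 : (m+2)+(m+2) = 2*(m+1)+2 := by ring
      have e4 : 2*m+2 = 2*(m+1) := by ring
      rw [e1, e2, e3] at this
      rw [e4] at h1
      have h5 : b (2*m) * (c^2 * b (2*(m+1))) ≤ b (2*m) * b (2*(m+1)+2) := by
        nlinarith [mul_le_mul_of_nonneg_right h1 h2.le]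
      exact le_of_mul_le_mul_left h5 h0
  have fin : ∀ m, b 0 * c^(2*m) ≤ b (2*m) := by
    intro m
    induction m with
    | zero => simp
    | succ m ih =>
      have := (main m).2
      have e4 : 2*(m+1) = 2*m+2 := by ring
      rw [e4, pow_add]
      nlinarith [mul_le_mul_of_nonneg_left ih (sq_nonneg c)]
  have hm : t ≤ 2 * ((t+1)/2) := by omega
  have hm2 : 2 * ((t+1)/2) ≤ t + 1 := by omega
  have hanti : b (2 * ((t+1)/2)) ≤ b t :=
    Finset.sum_le_sum fun x _ => fS_anti hP S x hm
  calc (N - k) * c^(t+1) ≤ (N - k) * c^(2 * ((t+1)/2)) :=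
        mul_le_mul_of_nonneg_left (pow_le_pow_of_le_one hc0.le hc1 hm2) hNk.le
    _ = b 0 * c^(2 * ((t+1)/2)) := by rw [hb0]
    _ ≤ _ := (fin _).trans hanti

/-- Uniform upper bound. -/
lemma fS_upper (hP : SymStoch P) [Nonempty V] {γ : ℝ} (hg : Gap P γ) (S : Finset V) (κ : ℝ)
    (hκ0 : 0 ≤ κ)
    (hκ : ∀ g : V → ℝ, (∀ x ∈ S, g x = 0) → κ * ip g g ≤ ip g g - ip g (op P g)) (t L : ℕ)
    (hL : (Fintype.card V : ℝ) ^ 3 ≤ Real.exp ((γ / 2) * L)) (x : V) :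
    fS P S t x ≤ Real.exp (-κ * (t - L)) * (1 + 1 / Fintype.card V) := by
  have hN : (0:ℝ) < Fintype.card V := by exact_mod_cast Fintype.card_pos
  by_cases htL : L ≤ t
  · obtain ⟨s, rfl⟩ := Nat.exists_eq_add_of_le htL
    rw [add_comm L s]
    have h1 := fS_le_lazy hP S s L x
    have hn := fS_norm hP S κ hκ s
    set β := Real.exp (-κ * s) with hβ
    have hβ0 : 0 < β := Real.exp_pos _
    have h2 := lzm_mix hP hg (fS P S s) β hβ0.le hn L hL x
    have h3 := (abs_le.mp h2).2
    have h4 : (∑ y, fS P S s y) / Fintype.card V ≤ β := by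
      have := ip_cs (fun _ => 1) (fS P S s)
      have e1 : ip (fun _ => 1) (fS P S s) = ∑ y, fS P S s y := by simp [ip]
      have e2 : ip (fun _ : V => (1:ℝ)) (fun _ => 1) = Fintype.card V := by simp [ip]
      rw [e1, e2] at this
      rw [div_le_iff₀ hN]
      refine abs_le_of_sq_le_sq' ?_ (by positivity) |>.2
      nlinarith [mul_le_mul_of_nonneg_left hn hN.le]
    have e : Real.exp (-κ * ((s + L : ℕ) - L : ℝ)) = β := by
      rw [hβ]; congr 1; push_cast; ring
    rw [e]
    have : β * (1 + 1 / (Fintype.card V:ℝ)) = β + β / Fintype.card V := by ring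
    rw [this]; linarith
  · push Not at htL
    have h1 : (1:ℝ) ≤ Real.exp (-κ * (t - L)) := by
      apply Real.one_le_exp
      have : (t:ℝ) ≤ L := by exact_mod_cast htL.le
      nlinarith
    have h2 : (0:ℝ) ≤ 1 / Fintype.card V := by positivity
    have := fS_le_one hP S t x
    nlinarith

/-- Lower bound from an arbitrary starting point. -/
lemma fS_lower (hP : SymStoch P) [Nonempty V] {γ : ℝ} (hg : Gap P γ) (S : Finset V) (κ : ℝ)
    (hκ : ∀ g : V → ℝ, (∀ x ∈ S, g x = 0) → κ * ip g g ≤ ip g g - ip g (op P g)) (t L : ℕ)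
    (hL : (Fintype.card V : ℝ) ^ 3 ≤ Real.exp ((γ / 2) * L))
    (F : ℝ) (hF : ∀ x, fS P S t x ≤ F) (x : V) :
    (∑ y, fS P S t y) / Fintype.card V - Real.exp (-κ * t) / Fintype.card V
      - F * ∑ i ∈ Finset.range L, op (lzm P ^ i) (ind S) x ≤ fS P S t x := by
  have h1 := fS_ge_lazy hP S t L F hF x
  have hn := fS_norm hP S κ hκ t
  have h2 := lzm_mix hP hg (fS P S t) _ (Real.exp_pos _).le hn L hL x
  have h3 := (abs_le.mp h2).1
  linarith
end

/-! ### Rayleigh bound for the killed chain -/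

lemma op_ind (P : Matrix V V ℝ) (S : Finset V) (x : V) : op P (ind S) x = ∑ s ∈ S, P x s := by
  unfold op ind; simp

lemma ip_ind (f : V → ℝ) (S : Finset V) : ip f (ind S) = ∑ s ∈ S, f s := by
  unfold ip ind; simp

lemma norm_pow_ind {P : Matrix V V ℝ} (hP : SymStoch P) (S : Finset V) (J : ℕ) (r0 : ℝ)
    (hr : ∀ s ∈ S, (P ^ (2 * J)) s s ≤ r0) :
    ip (op (P ^ J) (ind S)) (op (P ^ J) (ind S)) ≤ (S.card : ℝ) ^ 2 * r0 := by
  have h1 : ∀ x, op (P^J) (ind S) x * op (P^J) (ind S) x ≤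
      (S.card : ℝ) * ∑ s ∈ S, ((P^J) x s) ^ 2 := by
    intro x
    rw [op_ind, ← sq]
    exact sq_sum_le_card_mul_sum_sq
  have h2 : ∀ s, ∑ x, ((P^J) x s)^2 = (P^(2*J)) s s := by
    intro s
    rw [two_mul, pow_add, Matrix.mul_apply]
    refine Finset.sum_congr rfl fun x _ => ?_
    rw [(hP.pow J).symm s x]; ring
  calc ip (op (P ^ J) (ind S)) (op (P ^ J) (ind S))
      ≤ ∑ x, (S.card : ℝ) * ∑ s ∈ S, ((P^J) x s) ^ 2 := Finset.sum_le_sum fun x _ => h1 x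
    _ = (S.card : ℝ) * ∑ s ∈ S, (P^(2*J)) s s := by
        rw [← Finset.mul_sum, Finset.sum_comm]; simp only [h2]
    _ ≤ (S.card : ℝ) * ∑ s ∈ S, r0 :=
        mul_le_mul_of_nonneg_left (Finset.sum_le_sum hr) (Nat.cast_nonneg _)
    _ = _ := by rw [Finset.sum_const, nsmul_eq_mul]; ring

lemma rayleigh {P : Matrix V V ℝ} (hP : SymStoch P) [Nonempty V] {γ : ℝ} (hγ : 0 < γ) (hg : Gap P γ)
    (S : Finset V) (hS : S.Nonempty) (J : ℕ) (a0 r0 τ : ℝ) (hτ : 0 < τ) (ha0 : 0 ≤ a0)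
    (hr : ∀ s ∈ S, (P ^ (2 * J)) s s ≤ r0)
    (ha : ∀ x, op P (ind S) x ≤ a0)
    (f : V → ℝ) (hf : ∀ x ∈ S, f x = 0) :
    ip f f ≤ (ip f f - ip f (op P f)) *
      (Fintype.card V * ((1 + τ) * (1 + J * a0) + (1 + 1/τ) * (S.card * r0 / γ)) / S.card
        + 1 / γ) := by
  set N : ℝ := (Fintype.card V : ℝ) with hN
  have hNpos : 0 < N := by rw [hN]; exact_mod_cast Fintype.card_pos
  set k : ℝ := (S.card : ℝ) with hk
  have hkpos : 0 < k := by rw [hk]; exact_mod_cast hS.card_pos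
  set E := ip f f - ip f (op P f) with hE
  set a := (∑ y, f y) / N with ha'
  set g : V → ℝ := fun y => f y - a with hgdef
  have hsum : ∑ v, g v = 0 := by
    simp only [hgdef, Finset.sum_sub_distrib, Finset.sum_const, Finset.card_univ, nsmul_eq_mul]
    rw [← hN, ha']; field_simp; ring
  have hfg : f = fun y => g y + a := by funext y; simp [hgdef]
  have e1 : ip g (fun _ => a) = 0 := by unfold ip; rw [← Finset.sum_mul, hsum, zero_mul]
  have e2 : ip (fun _ => a) g = 0 := by rw [ip_comm, e1]
  have e3 : ip (fun _ : V => a) (fun _ => a) = N * a^2 := by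
    unfold ip; simp [hN]; ring
  have e4 : ip (fun _ : V => a) (op P g) = 0 := by rw [hP.sd, hP.op_const, e2]
  have hff : ip f f = ip g g + N * a^2 := by
    conv_lhs => rw [hfg]
    simp only [ip_add_left, ip_add_right]
    rw [e1, e2, e3]; ring
  have hEg : E = ip g g - ip g (op P g) := by
    have : ip f (op P f) = ip g (op P g) + N * a^2 := by
      conv_lhs => rw [hfg]
      rw [op_add P g (fun _ => a), hP.op_const]
      simp only [ip_add_left, ip_add_right]
      rw [e1, e3, e4]; ring
    rw [hE, hff, this]; ring
  have hgap := hg g hsum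
  rw [← hEg] at hgap
  have hE0 : 0 ≤ E := hP.dir_nonneg f
  have hgg : ip g g ≤ E / γ := by rw [le_div_iff₀ hγ]; linarith
  set ψ : V → ℝ := fun x => ∑ j ∈ Finset.range J, op (P^j) (ind S) x with hψ
  set T := op (P^J) (ind S) with hT
  have hind0 : ∀ x, 0 ≤ ind S x := fun x => by unfold ind; split_ifs <;> norm_num
  have hT0 : ∀ x, 0 ≤ T x := fun x => (hP.pow J).op_nonneg hind0 x
  have hψ0 : ∀ x, 0 ≤ ψ x := fun x => Finset.sum_nonneg fun j _ => (hP.pow j).op_nonneg hind0 x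
  have htel : ∀ x, ψ x - op P ψ x = ind S x - T x := by
    intro x
    have : op P ψ x = ∑ j ∈ Finset.range J, op (P^(j+1)) (ind S) x := by
      rw [hψ, _root_.op_sum]
      refine Finset.sum_congr rfl fun j _ => ?_
      rw [pow_succ', op_matmul]
    rw [this, hψ]
    beta_reduce
    rw [← Finset.sum_sub_distrib, Finset.sum_range_sub' (fun j => op (P^j) (ind S) x)]
    simp [op_one, hT]
  have hdirψ : ∀ h : V → ℝ, ip h ψ - ip h (op P ψ) = ip h (ind S) - ip h T := by
    intro h
    rw [← ip_sub_right, ← ip_sub_right]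
    congr 1; funext x; exact htel x
  have hfS : ip f (ind S) = 0 := by
    rw [ip_ind]; exact Finset.sum_eq_zero hf
  have hT1 : ip f T = ip g T + a * k := by
    conv_lhs => rw [hfg]
    rw [ip_add_left]
    congr 1
    have : ip (fun _ => a) T = a * ∑ x, T x := by unfold ip; rw [Finset.mul_sum]
    rw [this, hT, (hP.pow J).sum_op]; simp [ind, hk]
  have hψS : ip ψ (ind S) ≤ k * (1 + J * a0) := by
    rw [hψ, ip_sum_left]
    have hterm : ∀ j ∈ Finset.range J, ip (op (P^j) (ind S)) (ind S) ≤ (if j = 0 then k else 0) + k * a0 := by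
      intro j _
      rcases j with _ | j
      · simp only [pow_zero, op_one, if_true]
        have : ip (ind S) (ind S) = k := by rw [ip_ind]; simp [ind, hk]
        rw [this]; have := mul_nonneg hkpos.le ha0; linarith
      · rw [ip_ind]
        simp only [Nat.succ_ne_zero, if_false, zero_add]
        have h1 : ∀ s ∈ S, op (P^(j+1)) (ind S) s ≤ a0 := by
          intro s _
          rw [pow_succ, op_matmul]
          have := (hP.pow j).op_mono ha s
          rwa [(hP.pow j).op_const] at this
        calc _ ≤ ∑ s ∈ S, a0 := Finset.sum_le_sum h1
          _ = _ := by rw [Finset.sum_const, nsmul_eq_mul]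
    refine (Finset.sum_le_sum hterm).trans ?_
    rw [Finset.sum_add_distrib, Finset.sum_const, Finset.card_range, nsmul_eq_mul]
    have : (∑ j ∈ Finset.range J, if j = 0 then k else 0) ≤ k := by
      rw [Finset.sum_ite_eq']; split_ifs <;> linarith
    nlinarith
  have hcs := hP.dir_cs f ψ
  rw [hdirψ f, hdirψ ψ, hfS, hT1, ← hE] at hcs
  have hψT : 0 ≤ ip ψ T := Finset.sum_nonneg fun x _ => mul_nonneg (hψ0 x) (hT0 x)
  have hcs2 : (ip g T + a * k)^2 ≤ E * (k * (1 + J * a0)) := by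
    have : E * (ip ψ (ind S) - ip ψ T) ≤ E * (k * (1 + J * a0)) :=
      mul_le_mul_of_nonneg_left (by linarith) hE0
    nlinarith
  have hgT : (ip g T)^2 ≤ (E / γ) * (k^2 * r0) := by
    refine (ip_cs g T).trans ?_
    exact mul_le_mul hgg (norm_pow_ind hP S J r0 hr) (ip_self_nonneg _) (by positivity)
  have hak : (a*k)^2 ≤ (1+τ) * (E * (k * (1 + J * a0))) + (1 + 1/τ) * ((E / γ) * (k^2 * r0)) := by
    have h1 : (a*k)^2 ≤ (1+τ) * (ip g T + a * k)^2 + (1+1/τ) * (ip g T)^2 := by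
      set p := ip g T + a * k
      set q := ip g T
      have e : a * k = p - q := by simp [p, q]
      rw [e]
      have h3 : (1+τ) * p^2 + (1+1/τ) * q^2 - (p-q)^2 = (τ * p + q)^2 / τ := by
        field_simp; ring
      have h4 : 0 ≤ (τ * p + q)^2 / τ := by positivity
      linarith
    have h2 : 0 ≤ 1 + 1/τ := by positivity
    nlinarith [mul_le_mul_of_nonneg_left hgT h2, mul_le_mul_of_nonneg_left hcs2 (by linarith : 0 ≤ 1+τ)]
  have ha2 : a^2 ≤ E * ((1 + τ) * (1 + J * a0) + (1 + 1/τ) * (k * r0 / γ)) / k := by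
    rw [le_div_iff₀ hkpos]
    have h5 : k * (a^2 * k) ≤ k * (E * ((1 + τ) * (1 + J * a0) + (1 + 1/τ) * (k * r0 / γ))) := by
      calc k * (a^2*k) = (a*k)^2 := by ring
        _ ≤ _ := hak
        _ = _ := by ring
    exact le_of_mul_le_mul_left h5 hkpos
  rw [hff]
  calc ip g g + N * a^2 ≤ E / γ + N * (E * ((1 + τ) * (1 + J * a0) + (1 + 1/τ) * (k * r0 / γ)) / k) :=
        add_le_add hgg (mul_le_mul_of_nonneg_left ha2 hNpos.le)
    _ = _ := by ring

/-! ### Graph facts -/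

lemma simpleStep_stoch (G : SimpleGraph V) (d : ℕ) (hd : 0 < d) (hreg : G.IsRegularOfDegree d) :
    SymStoch (simpleStep G d) where
  symm x y := by simp [simpleStep, G.adj_comm]
  nonneg x y := by simp only [simpleStep, Matrix.of_apply]; split_ifs <;> positivity
  rowsum x := by
    simp only [simpleStep, Matrix.of_apply]
    rw [← Finset.sum_filter, Finset.sum_const, nsmul_eq_mul]
    have h := hreg x
    rw [← SimpleGraph.card_neighborFinset_eq_degree] at h
    have : (Finset.univ.filter fun y => G.Adj x y).card = d := by
      rw [← h]; congr 1; ext y; simp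
    rw [this]; field_simp

lemma op_simpleStep (G : SimpleGraph V) (d : ℕ) (f : V → ℝ) (x : V) :
    op (simpleStep G d) f x = (d:ℝ)⁻¹ * ∑ y ∈ Finset.univ.filter (fun y => G.Adj x y), f y := by
  unfold op simpleStep
  rw [Finset.mul_sum, Finset.sum_filter]
  refine Finset.sum_congr rfl fun y _ => ?_
  simp only [Matrix.of_apply]; split_ifs <;> simp

lemma card_nbr (G : SimpleGraph V) (d : ℕ) (hreg : G.IsRegularOfDegree d) (x : V) :
    (Finset.univ.filter fun y => G.Adj x y).card = d := by
  have h := hreg x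
  rw [← SimpleGraph.card_neighborFinset_eq_degree] at h
  rw [← h]; congr 1; ext y; simp

lemma gap_of_spectral (G : SimpleGraph V) (d : ℕ) (g γ : ℝ)
    (hg : SpectralGapLB G d g) (h : γ ≤ 2 * g) : Gap (simpleStep G d) γ := by
  intro x hx
  have h1 := hg x hx
  have h2 : (∑ u : V, ∑ v : V, x u * lazyStep G d u v * x v)
      = (2:ℝ)⁻¹ * ip x x + (2:ℝ)⁻¹ * ip x (op (simpleStep G d) x) := by
    unfold ip op
    rw [Finset.mul_sum, Finset.mul_sum, ← Finset.sum_add_distrib]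
    refine Finset.sum_congr rfl fun u _ => ?_
    have : ∀ v, x u * lazyStep G d u v * x v =
      (if u = v then (2:ℝ)⁻¹ * (x u * x v) else 0) + (2:ℝ)⁻¹ * (x u * (simpleStep G d u v * x v)) := by
      intro v
      simp only [lazyStep, simpleStep, Matrix.of_apply]
      split_ifs <;> ring
    simp only [this, Finset.sum_add_distrib]
    rw [Finset.sum_ite_eq]
    simp [Finset.mul_sum]
  have h3 : ∑ v, x v ^ 2 = ip x x := by unfold ip; exact Finset.sum_congr rfl fun v _ => sq _
  rw [h2, h3] at h1
  have h4 := ip_self_nonneg x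
  nlinarith [mul_le_mul_of_nonneg_right h h4]

/-- local version of P3 -/
def LocP3 (G : SimpleGraph V) (R ρ : ℝ) : Prop :=
  ∀ a y : V, (G.dist a y : ℝ) ≤ R →
    (((univ : Finset V).filter fun w => G.Adj y w ∧ G.dist w a ≤ G.dist a y).card : ℝ) ≤
      ρ * (G.dist a y : ℝ)

lemma one_step (G : SimpleGraph V) (d : ℕ) (hd : 0 < d) (hreg : G.IsRegularOfDegree d)
    (hconn : G.Connected) (R ρ : ℝ) (hρ : 0 ≤ ρ) (h3 : LocP3 G R ρ) (z : ℝ) (hz : 1 ≤ z)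
    (a y : V) (hay : (G.dist a y : ℝ) ≤ R) :
    op (simpleStep G d) (fun w => z⁻¹ ^ (G.dist w a)) y ≤
      (z⁻¹ + ρ * R * z / d) * z⁻¹ ^ (G.dist y a) := by
  rw [op_simpleStep]
  have hdpos : (0:ℝ) < d := by exact_mod_cast hd
  have hzpos : 0 < z := by linarith
  set D := G.dist y a with hD
  have hDc : G.dist a y = D := by rw [hD, SimpleGraph.dist_comm]
  have hz1 : z⁻¹ ≤ 1 := inv_le_one_of_one_le₀ hz
  have hz0 : 0 < z⁻¹ := by positivity
  have hterm : ∀ w ∈ Finset.univ.filter (fun w => G.Adj y w), z⁻¹ ^ (G.dist w a) ≤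
      z⁻¹ ^ (D+1) + (if G.dist w a ≤ G.dist a y then z * z⁻¹^D else 0) := by
    intro w hw
    have hyw : G.Adj y w := by simpa using hw
    have hdist : D ≤ G.dist w a + 1 := by
      have h := hconn.dist_triangle (u := y) (v := w) (w := a)
      have h' : G.dist y w = 1 := SimpleGraph.dist_eq_one_iff_adj.mpr hyw
      omega
    split_ifs with h
    · have h1 : z⁻¹ ^ (G.dist w a) * z⁻¹ ≤ z⁻¹ ^ D := by
        rw [← pow_succ]; exact pow_le_pow_of_le_one hz0.le hz1 hdist
      have h2 : z⁻¹ ^ (G.dist w a) ≤ z * z⁻¹ ^ D := by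
        have := mul_le_mul_of_nonneg_left h1 hzpos.le
        have e : z * (z⁻¹ ^ (G.dist w a) * z⁻¹) = z⁻¹ ^ (G.dist w a) := by field_simp
        rwa [e] at this
      have : 0 ≤ z⁻¹ ^ (D+1) := by positivity
      linarith
    · rw [hDc] at h
      push Not at h
      rw [add_zero]
      exact pow_le_pow_of_le_one hz0.le hz1 h
  have hsum := Finset.sum_le_sum hterm
  rw [Finset.sum_add_distrib, Finset.sum_const, card_nbr G d hreg, nsmul_eq_mul,
    ← Finset.sum_filter, Finset.sum_const, nsmul_eq_mul, Finset.filter_filter] at hsum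
  have hc := h3 a y hay
  have hc2 : ρ * (G.dist a y : ℝ) ≤ ρ * R := mul_le_mul_of_nonneg_left hay hρ
  have hq : 0 ≤ z * z⁻¹^D := by positivity
  have hfin := hsum.trans (add_le_add_right (mul_le_mul_of_nonneg_right (hc.trans hc2) hq) _)
  calc (d:ℝ)⁻¹ * ∑ w ∈ Finset.univ.filter (fun w => G.Adj y w), z⁻¹ ^ (G.dist w a)
      ≤ (d:ℝ)⁻¹ * (d * z⁻¹ ^ (D+1) + ρ * R * (z * z⁻¹^D)) :=
        mul_le_mul_of_nonneg_left hfin (by positivity)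
    _ = _ := by rw [pow_succ]; field_simp

lemma return_bound (G : SimpleGraph V) (d : ℕ) (hd : 0 < d) (hreg : G.IsRegularOfDegree d)
    (hconn : G.Connected) (R ρ : ℝ) (hρ : 0 ≤ ρ) (h3 : LocP3 G R ρ) (z : ℝ) (hz : 1 ≤ z)
    (hR : 0 ≤ R) (m : ℕ) (hm : (m:ℝ) ≤ R) (s : V) :
    (simpleStep G d ^ m) s s ≤ (z⁻¹ + ρ * R * z / d) ^ m := by
  set P := simpleStep G d with hPdef
  have hP : SymStoch P := simpleStep_stoch G d hd hreg
  set r := (z⁻¹ + ρ * R * z / d) with hr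
  have hr0 : 0 ≤ r := by rw [hr]; positivity
  set φ : V → ℝ := fun w => z⁻¹ ^ (G.dist w s) with hφ
  have key : ∀ m : ℕ, ∀ y, (G.dist y s : ℝ) + m ≤ R → op (P^m) φ y ≤ r^m * φ y := by
    intro m
    induction m with
    | zero => intro y _; simp [op_one]
    | succ m ih =>
      intro y hy
      push_cast at hy
      rw [pow_succ', op_matmul, op_simpleStep]
      have h1 : ∀ w ∈ Finset.univ.filter (fun w => G.Adj y w), op (P^m) φ w ≤ r^m * φ w := by
        intro w hw
        have hyw : G.Adj y w := by simpa using hw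
        apply ih
        have h := hconn.dist_triangle (u := w) (v := y) (w := s)
        have h' : G.dist w y = 1 := SimpleGraph.dist_eq_one_iff_adj.mpr hyw.symm
        have : (G.dist w s : ℝ) ≤ G.dist y s + 1 := by
          rw [h'] at h; have : G.dist w s ≤ G.dist y s + 1 := by omega
          exact_mod_cast this
        linarith
      have h2 := Finset.sum_le_sum h1
      rw [← Finset.mul_sum] at h2
      have hm0 : (0:ℝ) ≤ m := Nat.cast_nonneg m
      have h4 := one_step G d hd hreg hconn R ρ hρ h3 z hz s y
        (by rw [SimpleGraph.dist_comm]; linarith)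
      rw [op_simpleStep] at h4
      have h5 := mul_le_mul_of_nonneg_left h2 (by positivity : (0:ℝ) ≤ (d:ℝ)⁻¹)
      have h6 := mul_le_mul_of_nonneg_left h4 (pow_nonneg hr0 m)
      refine h5.trans ?_
      calc _ = r^m * ((d:ℝ)⁻¹ * ∑ w ∈ Finset.univ.filter (fun w => G.Adj y w), φ w) := by ring
        _ ≤ _ := h6
        _ = _ := by rw [pow_succ]; ring
  have h1 := key m s (by simpa using hm)
  have h2 : φ s = 1 := by simp [hφ]
  rw [h2, mul_one] at h1
  refine le_trans ?_ h1
  have h3 : (P^m) s s = op (P^m) (ind {s}) s := by rw [op_ind]; simp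
  rw [h3]
  refine (hP.pow m).op_mono (fun x => ?_) s
  unfold ind
  split_ifs with h
  · have : x = s := by simpa using h
    rw [this, h2]
  · simp only [hφ]; positivity

lemma common_nbr (G : SimpleGraph V) (hconn : G.Connected) (R ρ : ℝ) (hρ : 0 ≤ ρ)
    (h3 : LocP3 G R ρ) (hR : 2 ≤ R) (y y' : V) (hne : y ≠ y') :
    ((Finset.univ.filter fun w => G.Adj y w ∧ G.Adj y' w).card : ℝ) ≤ 2 * ρ := by
  by_cases hemp : (Finset.univ.filter fun w => G.Adj y w ∧ G.Adj y' w) = ∅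
  · rw [hemp]; simp; positivity
  obtain ⟨w0, hw0⟩ := Finset.nonempty_iff_ne_empty.mpr hemp
  have hw0' : G.Adj y w0 ∧ G.Adj y' w0 := by simpa using hw0
  have hD2 : G.dist y y' ≤ 2 := by
    have h := hconn.dist_triangle (u := y) (v := w0) (w := y')
    have h1 : G.dist y w0 = 1 := SimpleGraph.dist_eq_one_iff_adj.mpr hw0'.1
    have h2 : G.dist w0 y' = 1 := SimpleGraph.dist_eq_one_iff_adj.mpr hw0'.2.symm
    omega
  have hD1 : 0 < G.dist y y' := hconn.pos_dist_of_ne hne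
  have hDr : (G.dist y y' : ℝ) ≤ 2 := by exact_mod_cast hD2
  have hc := h3 y y' (hDr.trans hR)
  have hsub : (Finset.univ.filter fun w => G.Adj y w ∧ G.Adj y' w) ⊆
      (univ : Finset V).filter fun w => G.Adj y' w ∧ G.dist w y ≤ G.dist y y' := by
    intro w hw
    simp only [Finset.mem_filter, Finset.mem_univ, true_and] at hw ⊢
    refine ⟨hw.2, ?_⟩
    have : G.dist w y = 1 := SimpleGraph.dist_eq_one_iff_adj.mpr hw.1.symm
    omega
  have := Finset.card_le_card hsub
  have h5 : ((Finset.univ.filter fun w => G.Adj y w ∧ G.Adj y' w).card : ℝ) ≤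
     (((univ : Finset V).filter fun w => G.Adj y' w ∧ G.dist w y ≤ G.dist y y').card : ℝ) := by
    exact_mod_cast this
  nlinarith

/-! ### Avoidance probabilities of good sets -/

lemma exp_le_one_sub {y : ℝ} (h0 : 0 ≤ y) (h1 : y ≤ 1/2) : Real.exp (-(y + y^2)) ≤ 1 - y := by
  have h2 : Real.exp (y + y^2) * (1 - y) ≥ 1 := by
    have h3 : 1 + (y+y^2) + (y+y^2)^2/2 ≤ Real.exp (y+y^2) :=
      Real.quadratic_le_exp_of_nonneg (by positivity)
    have h4 : (1 + (y+y^2) + (y+y^2)^2/2) * (1-y) ≥ 1 := by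
      have : (1 + (y+y^2) + (y+y^2)^2/2) * (1-y) - 1 = y^2 * (1/2 - y/2 - y^2/2 - y^3/2) := by ring
      have h5 : y^2 ≤ 1/4 := by nlinarith
      have h6 : y^3 ≤ 1/8 := by nlinarith [mul_nonneg h0 (sq_nonneg y)]
      nlinarith [sq_nonneg y, mul_nonneg (sq_nonneg y) (by linarith : 0 ≤ 1/2 - y/2 - y^2/2 - y^3/2)]
    nlinarith [mul_le_mul_of_nonneg_right h3 (by linarith : 0 ≤ 1 - y)]
  rw [Real.exp_neg, inv_le_iff_one_le_mul₀ (Real.exp_pos _)]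
  linarith

set_option maxHeartbeats 2000000 in
lemma avoid_bounds {P : Matrix V V ℝ} (hP : SymStoch P) [Nonempty V] {γ : ℝ} (hγ : 0 < γ)
    (hg : Gap P γ) (S : Finset V) (hS : S.Nonempty) (J : ℕ) (a0 r0 τ : ℝ) (hτ : 0 < τ)
    (ha0 : 0 ≤ a0) (hr00 : 0 ≤ r0)
    (hr : ∀ s ∈ S, (P ^ (2 * J)) s s ≤ r0)
    (ha : ∀ x, op P (ind S) x ≤ a0)
    (t L : ℕ) (hL : (Fintype.card V : ℝ) ^ 3 ≤ Real.exp ((γ / 2) * L))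
    (N T k0 θ η : ℝ) (hN : N = Fintype.card V) (hT : T = t / N)
    (hk0 : (S.card : ℝ) ≤ k0) (hk0N : 4 * k0 ≤ N)
    (hθ0 : 0 ≤ θ) (hθ1 : θ ≤ 1)
    (hθ : (1 + τ) * (1 + J * a0) + (1 + 1/τ) * (k0 * r0 / γ) + k0 / (γ * N) ≤ 1 + θ)
    (hη1 : η ≤ 1)
    (hη : Real.exp (k0 * T * θ + k0 * L / N) * (1 + 1/N) ≤ 1 + η)
    (hη2 : 8 * k0^2 * (T+1) / N + 2 / N ≤ η) (x : V) :
    fS P S t x ≤ (1 + η) * Real.exp (-T) ^ S.card ∧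
    Real.exp (-T) ^ S.card * (1 - η - 2 * ∑ i ∈ Finset.range L, op (lzm P ^ i) (ind S) x)
      ≤ fS P S t x := by
  have hNpos : 0 < N := by rw [hN]; exact_mod_cast Fintype.card_pos
  have hN1 : 1 ≤ N := by rw [hN]; exact_mod_cast Fintype.card_pos
  set k : ℝ := (S.card : ℝ) with hk
  have hkpos : 0 < k := by rw [hk]; exact_mod_cast hS.card_pos
  have hk1 : 1 ≤ k := by rw [hk]; exact_mod_cast hS.card_pos
  clear_value k
  have hT0 : 0 ≤ T := by rw [hT]; positivity
  have htT : (t:ℝ) = T * N := by rw [hT, div_mul_cancel₀ _ hNpos.ne']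
  set κ := k / N * (1 - θ) with hκdef
  have hκ0 : 0 ≤ κ := mul_nonneg (div_nonneg hkpos.le hNpos.le) (by linarith)
  clear_value κ
  have hκ : ∀ g : V → ℝ, (∀ x ∈ S, g x = 0) → κ * ip g g ≤ ip g g - ip g (op P g) := by
    intro f hf
    have h1 := rayleigh hP hγ hg S hS J a0 r0 τ hτ ha0 hr ha f hf
    have hE0 : 0 ≤ ip f f - ip f (op P f) := hP.dir_nonneg f
    rw [← hN, ← hk] at h1
    set E := ip f f - ip f (op P f)
    have hB : N * ((1 + τ) * (1 + J * a0) + (1 + 1/τ) * (k * r0 / γ)) / k + 1 / γ ≤ N / k * (1 + θ) := by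
      have e : N * ((1 + τ) * (1 + J * a0) + (1 + 1/τ) * (k * r0 / γ)) / k + 1 / γ
        = N / k * ((1 + τ) * (1 + J * a0) + (1 + 1/τ) * (k * r0 / γ) + k / (γ * N)) := by
        have hNne := hNpos.ne'
        have hkne := hkpos.ne'
        have hγne := hγ.ne'
        clear hT htT hN hθ hη hη2
        field_simp
      rw [e]
      refine mul_le_mul_of_nonneg_left (le_trans ?_ hθ) (by positivity)
      gcongr
    have h2 : ip f f ≤ E * (N / k * (1 + θ)) := h1.trans (mul_le_mul_of_nonneg_left hB hE0)
    calc κ * ip f f ≤ κ * (E * (N / k * (1 + θ))) := mul_le_mul_of_nonneg_left h2 hκ0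
      _ = E * (1 - θ^2) := by rw [hκdef]; field_simp; ring
      _ ≤ E * 1 := mul_le_mul_of_nonneg_left (by linarith [sq_nonneg θ]) hE0
      _ = E := mul_one E
  have hqk : Real.exp (-T) ^ S.card = Real.exp (-(k * T)) := by
    rw [← Real.exp_nat_mul, ← hk]; congr 1; ring
  have hup : ∀ y, fS P S t y ≤ (1 + η) * Real.exp (-T) ^ S.card := by
    intro y
    have h := fS_upper hP hg S κ hκ0 hκ t L hL y
    rw [← hN] at h
    refine h.trans ?_
    rw [hqk]
    have h1 : Real.exp (-κ * (t - L)) ≤ Real.exp (k0 * T * θ + k0 * L / N) * Real.exp (-(k*T)) := by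
      rw [← Real.exp_add, Real.exp_le_exp]
      have e1 : -κ * (t - L) = -(k*T) + k * T * θ + k * L / N * (1 - θ) := by
        rw [hκdef, htT]; field_simp; ring
      rw [e1]
      have e2 : k * T * θ ≤ k0 * T * θ := by gcongr
      have e3 : k * L / N * (1 - θ) ≤ k0 * L / N * 1 := by
        have hk00 : 0 ≤ k0 := by linarith
        have : 0 ≤ k0 * L / N := by positivity
        have : k * L / N ≤ k0 * L / N := by gcongr
        have : 0 ≤ k * L / N := by positivity
        have hm : 0 ≤ k * L / N * θ := by positivity
        linarith
      linarith
    calc _ ≤ Real.exp (k0 * T * θ + k0 * L / N) * Real.exp (-(k*T)) * (1 + 1/N) := by gcongr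
      _ = Real.exp (k0 * T * θ + k0 * L / N) * (1 + 1/N) * Real.exp (-(k*T)) := by ring
      _ ≤ _ := by gcongr
  refine ⟨hup x, ?_⟩
  have hlow := fS_lower hP hg S κ hκ t L hL _ hup x
  have havg := fS_avg_lower hP S t (by rw [← hN]; linarith)
  rw [← hN, ← hk] at havg
  rw [← hN] at hlow
  set Sg := ∑ i ∈ Finset.range L, op (lzm P ^ i) (ind S) x with hSg
  have hSg0 : 0 ≤ Sg := Finset.sum_nonneg fun i _ => (hP.lzm.pow i).op_nonneg
    (fun x => by unfold ind; split_ifs <;> norm_num) x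
  set Q := Real.exp (-T) ^ S.card with hQ
  have hQ0 : 0 < Q := by positivity
  have hkN : 4 * k ≤ N := by linarith
  set y := k / (N - k) with hy
  have hNk : 0 < N - k := by linarith
  have hy0 : 0 ≤ y := by positivity
  have hy2 : y ≤ 2 * (k/N) := by
    rw [hy, div_le_iff₀ hNk]
    have e : 2 * (k/N) * (N - k) = k * (2 - 2 * (k / N)) := by field_simp
    have hkN' : k / N ≤ 1/4 := by rw [div_le_iff₀ hNpos]; linarith
    rw [e]
    have := mul_le_mul_of_nonneg_left (by linarith : (1:ℝ) ≤ 2 - 2 * (k/N)) hkpos.le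
    linarith
  have hkN' : k / N ≤ 1/4 := by rw [div_le_iff₀ hNpos]; linarith
  have hyh : y ≤ 1/2 := by linarith
  have hyy : y + y^2 ≤ k/N + 6 * (k/N)^2 := by
    have e : y = k/N + y * (k/N) := by rw [hy]; field_simp; ring
    have hkN0 : 0 ≤ k/N := by positivity
    have : y * (k/N) ≤ 2 * (k/N)^2 := by
      have := mul_le_mul_of_nonneg_right hy2 hkN0
      linarith
    have : y^2 ≤ 4 * (k/N)^2 := by
      have := pow_le_pow_left₀ hy0 hy2 2
      linarith
    linarith
  have h1 : Real.exp (-((k/N + 6 * (k/N)^2) * (t+1))) ≤ (1-y)^(t+1) := by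
    have := pow_le_pow_left₀ (Real.exp_pos _).le (exp_le_one_sub hy0 hyh) (t+1)
    refine le_trans ?_ this
    rw [← Real.exp_nat_mul, Real.exp_le_exp]
    push_cast
    have := mul_le_mul_of_nonneg_right hyy (show (0:ℝ) ≤ t + 1 by positivity)
    linarith
  have h2 : Q * (1 - (k/N + 6*k^2*(T+1)/N)) ≤ Real.exp (-((k/N + 6 * (k/N)^2) * (t+1))) := by
    have e : -((k/N + 6 * (k/N)^2) * (t+1)) = -(k*T) + -(k/N + 6 * k^2 * (T + 1/N)/N) := by
      rw [htT]; field_simp; ring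
    rw [e, Real.exp_add, hqk]
    refine mul_le_mul_of_nonneg_left ?_ (Real.exp_pos _).le
    have h3 := Real.add_one_le_exp (-(k/N + 6 * k^2 * (T + 1/N)/N))
    have h4 : 6 * k^2 * (T + 1/N)/N ≤ 6*k^2*(T+1)/N := by
      gcongr
      rw [div_le_one hNpos]; exact hN1
    linarith
  have h5 : Q * (1 - 8 * k0^2 * (T+1)/N) ≤ (∑ x, fS P S t x) / N := by
    rw [le_div_iff₀ hNpos]
    refine le_trans ?_ havg
    have h6 := h2.trans h1
    have h7 : N * ((1 - k/N) * (Q * (1 - (k/N + 6*k^2*(T+1)/N)))) ≤ (N - k) * (1-y)^(t+1) := by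
      have : N * ((1 - k/N) * (Q * (1 - (k/N + 6*k^2*(T+1)/N)))) = (N - k) * (Q * (1 - (k/N + 6*k^2*(T+1)/N))) := by
        field_simp
      rw [this]; gcongr
    refine le_trans ?_ h7
    have h8 : k / N ≤ k^2 * (T+1) / N := by
      gcongr; have := mul_nonneg hT0 (sq_nonneg k); have := mul_le_mul_of_nonneg_left hk1 hkpos.le; linarith
    have h9 : 8 * k^2*(T+1)/N ≤ 8 * k0^2 * (T+1)/N := by gcongr
    have h10 : (1 - 8 * k0^2 * (T+1)/N) ≤ (1 - k/N) * (1 - (k/N + 6*k^2*(T+1)/N)) := by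
      have e1 : 8 * k^2*(T+1)/N = 8 * (k^2 * (T+1)/N) := by ring
      have e2 : 6 * k^2*(T+1)/N = 6 * (k^2 * (T+1)/N) := by ring
      rw [e1] at h9; rw [e2]
      have : 0 ≤ k/N := by positivity
      have : 0 ≤ k^2 * (T+1)/N := by positivity
      linarith [mul_nonneg ‹0 ≤ k/N› ‹0 ≤ k/N›, mul_nonneg ‹0 ≤ k/N› ‹0 ≤ k^2 * (T+1)/N›]
    have := mul_le_mul_of_nonneg_left h10 (mul_nonneg hNpos.le hQ0.le)
    linarith
  have h11 : Real.exp (-κ * t) / N ≤ Q * (2 / N) := by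
    have e1 : -κ * t = k * T * θ + -(k*T) := by rw [hκdef, htT]; field_simp; ring
    rw [e1, Real.exp_add, ← hqk]
    have : Real.exp (k * T * θ) ≤ 2 := by
      have hm : Real.exp (k * T * θ) ≤ Real.exp (k0 * T * θ + k0 * L / N) := by
        rw [Real.exp_le_exp]
        have : k * T * θ ≤ k0 * T * θ := by gcongr
        have : 0 ≤ k0 * L / N := by have : 0 ≤ k0 := by linarith
                                    positivity
        linarith
      have : 0 ≤ 1/N := by positivity
      linarith [mul_nonneg (Real.exp_pos (k0 * T * θ + k0 * L / N)).le this]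
    calc _ ≤ 2 * Q / N := by gcongr
      _ = _ := by ring
  have h12 : (1 + η) * Q * Sg ≤ 2 * Q * Sg := by gcongr; linarith
  have h13 := mul_le_mul_of_nonneg_left hη2 hQ0.le
  linarith

/-! ### Geodesics -/

/-- outward kernel -/
def outK (G : SimpleGraph V) (d : ℕ) (v : V) : Matrix V V ℝ :=
  Matrix.of fun x y => if G.Adj x y ∧ G.dist v y = G.dist v x + 1 then ((d:ℝ))⁻¹ else 0

lemma outK_nonneg (G : SimpleGraph V) (d : ℕ) (v x y : V) : 0 ≤ outK G d v x y := by
  simp only [outK, Matrix.of_apply]; split_ifs <;> positivity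

lemma outK_le (G : SimpleGraph V) (d : ℕ) (v x y : V) : outK G d v x y ≤ simpleStep G d x y := by
  simp only [outK, simpleStep, Matrix.of_apply]
  by_cases h : G.Adj x y
  · simp only [h, true_and, if_true]; split_ifs <;> first | rfl | positivity
  · simp [h]

/-- geodesic from `v` -/
def Geo (G : SimpleGraph V) (v : V) {h : ℕ} (p : Fin (h+1) → V) : Prop :=
  p 0 = v ∧ ∀ i : Fin h, G.Adj (p i.castSucc) (p i.succ) ∧
    G.dist v (p i.succ) = G.dist v (p i.castSucc) + 1

lemma geo_of (G : SimpleGraph V) (d : ℕ) (v : V) {h : ℕ} (p : Fin (h+1) → V) (h0 : p 0 = v)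
    (h1 : ∀ i : Fin h, outK G d v (p i.castSucc) (p i.succ) ≠ 0) : Geo G v p := by
  refine ⟨h0, fun i => ?_⟩
  have := h1 i
  simp only [outK, Matrix.of_apply] at this
  by_contra hc
  rw [if_neg hc] at this
  exact this rfl

lemma geo_dist {G : SimpleGraph V} {v : V} {h : ℕ} {p : Fin (h+1) → V} (hp : Geo G v p)
    (i : Fin (h+1)) : G.dist v (p i) = i := by
  induction i using Fin.induction with
  | zero => rw [hp.1]; simp
  | succ i ih => rw [(hp.2 i).2, ih]; simp

def tl {h : ℕ} (p : Fin (h+1) → V) : Finset V := univ.image (fun i : Fin h => p i.succ)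

lemma mem_tl {h : ℕ} {p : Fin (h+1) → V} {x : V} : x ∈ tl p ↔ ∃ i : Fin h, p i.succ = x := by
  simp [tl]

def co {h : ℕ} (p p' : Fin (h+1) → V) : ℕ := (univ.filter fun i : Fin h => p i.succ = p' i.succ).card

lemma tl_inj {G : SimpleGraph V} {v : V} {h : ℕ} {p p' : Fin (h+1) → V} (hp : Geo G v p)
    (hp' : Geo G v p') (i j : Fin h) (hij : p i.succ = p' j.succ) : i = j := by
  have h1 := geo_dist hp i.succ
  have h2 := geo_dist hp' j.succ
  rw [hij, h2] at h1
  ext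
  simpa using h1.symm

lemma card_tl {G : SimpleGraph V} {v : V} {h : ℕ} {p : Fin (h+1) → V} (hp : Geo G v p) :
    (tl p).card = h := by
  unfold tl
  rw [Finset.card_image_of_injective _ (fun i j hij => tl_inj hp hp i j hij)]
  simp

lemma card_tl_union {G : SimpleGraph V} {v : V} {h : ℕ} {p p' : Fin (h+1) → V} (hp : Geo G v p)
    (hp' : Geo G v p') : (tl p ∪ tl p').card + co p p' = 2 * h := by
  have h1 : tl p ∩ tl p' = (univ.filter fun i : Fin h => p i.succ = p' i.succ).image
      (fun i : Fin h => p i.succ) := by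
    ext x
    simp only [Finset.mem_inter, mem_tl, Finset.mem_image, Finset.mem_filter, Finset.mem_univ, true_and]
    constructor
    · rintro ⟨⟨i, hi⟩, ⟨j, hj⟩⟩
      have := tl_inj hp hp' i j (hi.trans hj.symm)
      subst this
      exact ⟨i, hi.trans hj.symm, hi⟩
    · rintro ⟨i, h1, h2⟩
      exact ⟨⟨i, h2⟩, ⟨i, h1.symm.trans h2⟩⟩
  have h2 : (tl p ∩ tl p').card = co p p' := by
    rw [h1, Finset.card_image_of_injective _ (fun i j hij => tl_inj hp hp i j hij), co]
  have h3 := Finset.card_union_add_card_inter (tl p) (tl p')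
  rw [h2, card_tl hp, card_tl hp'] at h3
  omega

lemma tl_nbr {G : SimpleGraph V} (hconn : G.Connected) {v : V} {h : ℕ} {p : Fin (h+1) → V}
    (hp : Geo G v p) (x : V) : ((tl p).filter fun y => G.Adj x y).card ≤ 3 := by
  have h1 : ((tl p).filter fun y => G.Adj x y).card ≤
      (Finset.Icc (G.dist v x - 1) (G.dist v x + 1)).card := by
    refine Finset.card_le_card_of_injOn (fun y => G.dist v y) ?_ ?_
    · intro y hy
      have hxy : G.Adj x y := by
        have := Finset.mem_coe.mp hy; exact (Finset.mem_filter.mp this).2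
      have e1 : G.dist x y = 1 := SimpleGraph.dist_eq_one_iff_adj.mpr hxy
      have e2 : G.dist y x = 1 := SimpleGraph.dist_eq_one_iff_adj.mpr hxy.symm
      have t1 := hconn.dist_triangle (u := v) (v := x) (w := y)
      have t2 := hconn.dist_triangle (u := v) (v := y) (w := x)
      simp only [Finset.coe_Icc, Set.mem_Icc]
      omega
    · intro y hy y' hy' hyy
      have hy1 := (Finset.mem_filter.mp (Finset.mem_coe.mp hy)).1
      have hy2 := (Finset.mem_filter.mp (Finset.mem_coe.mp hy')).1
      obtain ⟨i, rfl⟩ := mem_tl.mp hy1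
      obtain ⟨j, rfl⟩ := mem_tl.mp hy2
      simp only [geo_dist hp] at hyy
      have : i.succ = j.succ := Fin.ext hyy
      rw [this]
  refine h1.trans ?_
  rw [Nat.card_Icc]; omega

lemma tl_op {G : SimpleGraph V} (d : ℕ) (hconn : G.Connected) {v : V} {h : ℕ}
    {p p' : Fin (h+1) → V} (hp : Geo G v p) (hp' : Geo G v p') (x : V) :
    op (simpleStep G d) (ind (tl p ∪ tl p')) x ≤ 6 / d := by
  rw [op_simpleStep]
  have h1 : ∑ y ∈ Finset.univ.filter (fun y => G.Adj x y), ind (tl p ∪ tl p') y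
      = (((tl p ∪ tl p').filter fun y => G.Adj x y).card : ℝ) := by
    unfold ind
    rw [← Finset.sum_filter, Finset.filter_filter, Finset.sum_const, nsmul_eq_mul, mul_one]
    congr 2; ext y; simp [and_comm]
  rw [h1, Finset.filter_union]
  have h2 := (Finset.card_union_le ((tl p).filter fun y => G.Adj x y) ((tl p').filter fun y => G.Adj x y)).trans
    (add_le_add (tl_nbr hconn hp x) (tl_nbr hconn hp' x))
  have h3 : ((((tl p).filter fun y => G.Adj x y) ∪ ((tl p').filter fun y => G.Adj x y)).card : ℝ) ≤ 6 := by
    exact_mod_cast h2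
  rw [div_eq_inv_mul]
  exact mul_le_mul_of_nonneg_left h3 (by positivity)

lemma outsum_le (G : SimpleGraph V) (d : ℕ) (hd : 0 < d) (hreg : G.IsRegularOfDegree d) (v x : V) :
    ∑ y, outK G d v x y ≤ 1 := by
  rw [← (simpleStep_stoch G d hd hreg).rowsum x]
  exact Finset.sum_le_sum fun y _ => outK_le G d v x y

lemma outsum_ge (G : SimpleGraph V) (d : ℕ) (hd : 0 < d) (hreg : G.IsRegularOfDegree d)
    (hconn : G.Connected) (R ρ : ℝ) (h3 : LocP3 G R ρ) (v x : V) (hx : (G.dist v x : ℝ) ≤ R) :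
    1 - ρ * G.dist v x / d ≤ ∑ y, outK G d v x y := by
  have hdpos : (0:ℝ) < d := by exact_mod_cast hd
  have hc := h3 v x hx
  have h1 : ∀ y, simpleStep G d x y ≤ outK G d v x y +
      (d:ℝ)⁻¹ * (if G.Adj x y ∧ G.dist y v ≤ G.dist v x then 1 else 0) := by
    intro y
    simp only [outK, simpleStep, Matrix.of_apply]
    by_cases hxy : G.Adj x y
    · simp only [hxy, true_and, if_true]
      by_cases h4 : G.dist y v ≤ G.dist v x
      · rw [if_pos h4]; split_ifs
        · have : (0:ℝ) ≤ (d:ℝ)⁻¹ := by positivity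
          linarith
        · simp
      · have e1 : G.dist x y = 1 := SimpleGraph.dist_eq_one_iff_adj.mpr hxy
        have t1 := hconn.dist_triangle (u := v) (v := x) (w := y)
        have t2 : G.dist y v = G.dist v y := SimpleGraph.dist_comm
        rw [if_pos (by omega)]; simp [h4]
    · simp [hxy]
  have h2 := Finset.sum_le_sum fun y (_ : y ∈ Finset.univ) => h1 y
  rw [(simpleStep_stoch G d hd hreg).rowsum x, Finset.sum_add_distrib, ← Finset.mul_sum,
    ← Finset.sum_filter, Finset.sum_const, nsmul_eq_mul, mul_one] at h2
  have h5 := mul_le_mul_of_nonneg_left hc (by positivity : (0:ℝ) ≤ (d:ℝ)⁻¹)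
  have e : (d:ℝ)⁻¹ * (ρ * (G.dist v x)) = ρ * G.dist v x / d := by field_simp
  rw [e] at h5
  linarith

def mass (G : SimpleGraph V) (d : ℕ) (v : V) (h : ℕ) : ℝ := PE (outK G d v) v h (fun _ => 1)

lemma mass_le (G : SimpleGraph V) (d : ℕ) (hd : 0 < d) (hreg : G.IsRegularOfDegree d) (v : V) (h : ℕ) :
    mass G d v h ≤ 1 := by
  unfold mass
  have := PE_mono_kernel _ _ (outK_nonneg G d v) (outK_le G d v) v h (fun _ => 1) (fun _ => zero_le_one)
  rwa [PE_one _ (simpleStep_stoch G d hd hreg).rowsum h v] at this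

lemma mass_ge (G : SimpleGraph V) (d : ℕ) (hd : 0 < d) (hreg : G.IsRegularOfDegree d)
    (hconn : G.Connected) (R ρ : ℝ) (hρ : 0 ≤ ρ) (h3 : LocP3 G R ρ) (v : V) (h : ℕ) (hh : (h:ℝ) ≤ R) :
    1 - ρ * h^2 / d ≤ mass G d v h := by
  have hdpos : (0:ℝ) < d := by exact_mod_cast hd
  induction h with
  | zero => unfold mass; rw [PE_zero]; simp
  | succ h ih =>
    push_cast at hh
    have ih' := ih (by linarith)
    have hm := mass_le G d hd hreg v h
    have h1 : (1 - ρ * h / d) * mass G d v h ≤ mass G d v (h+1) := by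
      unfold mass
      rw [PE_snoc, ← PE_mul]
      refine PE_mono _ (outK_nonneg G d v) _ _ _ _ fun p hp0 hp => ?_
      have hg := geo_of G d v p hp0 hp
      have hl := geo_dist hg (Fin.last h)
      simp only [Fin.val_last] at hl
      have := outsum_ge G d hd hreg hconn R ρ h3 v (p (Fin.last h)) (by rw [hl]; linarith)
      rw [hl] at this
      simpa using this
    have h0 : 0 ≤ ρ * h / d := by positivity
    have h2 : mass G d v h - ρ * h / d ≤ (1 - ρ * h / d) * mass G d v h := by nlinarith
    have h4 : ρ * (((h+1:ℕ):ℝ))^2/d = ρ * h^2/d + ρ * h / d + (ρ * h / d + ρ / d) := by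
      push_cast; ring
    rw [h4]
    have : 0 ≤ ρ / d := by positivity
    linarith

/-! ### Pairs of geodesics -/

def PP (M : Matrix V V ℝ) (v : V) (h : ℕ) (F : (Fin (h+1) → V) → (Fin (h+1) → V) → ℝ) : ℝ :=
  PE M v h (fun p => PE M v h (fun p' => F p p'))

lemma PP_snoc (M : Matrix V V ℝ) (v : V) (h : ℕ) (F : (Fin (h+2) → V) → (Fin (h+2) → V) → ℝ) :
    PP M v (h+1) F = PP M v h (fun p p' => ∑ y, ∑ y', M (p (Fin.last h)) y * M (p' (Fin.last h)) y' *
      F (Fin.snoc (α := fun _ => V) p y) (Fin.snoc (α := fun _ => V) p' y')) := by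
  unfold PP
  rw [PE_snoc]
  congr 1; funext p
  rw [PE_sum]
  refine Finset.sum_congr rfl fun y _ => ?_
  rw [PE_snoc, ← PE_mul]
  congr 1; funext p'
  rw [Finset.mul_sum]
  refine Finset.sum_congr rfl fun y' _ => ?_
  ring

lemma PP_mono (G : SimpleGraph V) (d : ℕ) (v : V) (h : ℕ)
    (F F' : (Fin (h+1) → V) → (Fin (h+1) → V) → ℝ)
    (hF : ∀ p p', Geo G v p → Geo G v p' → F p p' ≤ F' p p') :
    PP (outK G d v) v h F ≤ PP (outK G d v) v h F' := by
  unfold PP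
  refine PE_mono _ (outK_nonneg G d v) _ _ _ _ fun p hp0 hp => ?_
  refine PE_mono _ (outK_nonneg G d v) _ _ _ _ fun p' hp0' hp' => ?_
  exact hF p p' (geo_of G d v p hp0 hp) (geo_of G d v p' hp0' hp')

lemma PP_mul (M : Matrix V V ℝ) (v : V) (h : ℕ) (c : ℝ) (F : (Fin (h+1) → V) → (Fin (h+1) → V) → ℝ) :
    PP M v h (fun p p' => c * F p p') = c * PP M v h F := by
  unfold PP
  rw [← PE_mul]; congr 1; funext p; rw [PE_mul]

lemma PP_add (M : Matrix V V ℝ) (v : V) (h : ℕ) (F F' : (Fin (h+1) → V) → (Fin (h+1) → V) → ℝ) :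
    PP M v h (fun p p' => F p p' + F' p p') = PP M v h F + PP M v h F' := by
  unfold PP
  rw [← PE_add]; congr 1; funext p; rw [PE_add]

lemma PP_one (G : SimpleGraph V) (d : ℕ) (v : V) (h : ℕ) :
    PP (outK G d v) v h (fun _ _ => 1) = mass G d v h ^ 2 := by
  unfold PP
  have : (fun p : Fin (h+1) → V => PE (outK G d v) v h (fun _ => 1)) = fun p => mass G d v h * 1 := by
    funext p; rw [mul_one]; rfl
  rw [this, PE_mul]
  unfold mass; ring

lemma co_snoc {h : ℕ} (p p' : Fin (h+1) → V) (y y' : V) :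
    co (Fin.snoc (α := fun _ => V) p y) (Fin.snoc (α := fun _ => V) p' y' : Fin (h+2) → V)
      = co p p' + if y = y' then 1 else 0 := by
  unfold co
  rw [Finset.card_filter, Finset.card_filter, Fin.sum_univ_castSucc]
  congr 1
  · refine Finset.sum_congr rfl fun i _ => ?_
    rw [← Fin.castSucc_succ]
    simp only [Fin.snoc_castSucc]
  · rw [Fin.succ_last]; simp only [Fin.snoc_last]

/-- hypotheses on the local parameters -/
structure Loc (G : SimpleGraph V) (d : ℕ) (R ρ z qi κ : ℝ) : Prop where
  hd : 0 < d
  hreg : G.IsRegularOfDegree d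
  hconn : G.Connected
  hρ : 0 ≤ ρ
  h3 : LocP3 G R ρ
  hz : 1 ≤ z
  hR : 2 ≤ R
  hqi : 1 ≤ qi
  hκ : (z⁻¹ + ρ * R * z / d)^2 + qi / d + 2 * ρ * qi * z^2 / d^2 ≤ κ

lemma pair_step {G : SimpleGraph V} {d : ℕ} {R ρ z qi κ : ℝ} (H : Loc G d R ρ z qi κ) (v x x' : V)
    (hxx : (G.dist x x' : ℝ) + 1 ≤ R) :
    ∑ y, ∑ y', outK G d v x y * outK G d v x' y' * (qi ^ (if y = y' then 1 else 0) * z⁻¹ ^ (G.dist y y'))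
      ≤ κ * z⁻¹ ^ (G.dist x x') := by
  obtain ⟨hd, hreg, hconn, hρ, h3, hz, hR, hqi, hκ⟩ := H
  have hP := simpleStep_stoch G d hd hreg
  set P := simpleStep G d with hPd
  have hdpos : (0:ℝ) < d := by exact_mod_cast hd
  have hz0 : 0 < z := by linarith
  set r := z⁻¹ + ρ * R * z / d with hr
  have hr0 : 0 ≤ r := by rw [hr]; positivity
  have hUP : ∀ y y', outK G d v x y * outK G d v x' y' ≤ P x y * P x' y' := fun y y' =>
    mul_le_mul (outK_le G d v x y) (outK_le G d v x' y') (outK_nonneg _ _ _ _ _) (hP.nonneg _ _)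
  have hA : ∑ y, ∑ y', outK G d v x y * outK G d v x' y' * (qi ^ (if y = y' then 1 else 0) * z⁻¹ ^ (G.dist y y'))
      ≤ ∑ y, ∑ y', (P x y * P x' y' * z⁻¹ ^ (G.dist y y') + if y = y' then qi * (P x y * P x' y') else 0) := by
    refine Finset.sum_le_sum fun y _ => Finset.sum_le_sum fun y' _ => ?_
    refine (mul_le_mul_of_nonneg_right (hUP y y') (by positivity)).trans ?_
    have hpp := mul_nonneg (hP.nonneg x y) (hP.nonneg x' y')
    split_ifs with h
    · subst h; simp only [SimpleGraph.dist_self, pow_zero, pow_one, mul_one]; linarith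
    · simp
  refine hA.trans ?_
  simp only [Finset.sum_add_distrib, Finset.sum_ite_eq, Finset.mem_univ, if_true]
  have hB : ∑ y, ∑ y', P x y * P x' y' * z⁻¹ ^ (G.dist y y') ≤ r^2 * z⁻¹^(G.dist x x') := by
    rw [Finset.sum_comm]
    have h1 : ∀ y', ∑ y, P x y * P x' y' * z⁻¹ ^ (G.dist y y') ≤ P x' y' * (r * z⁻¹ ^ (G.dist y' x)) := by
      intro y'
      by_cases hadj : G.Adj x' y'
      · have e1 : G.dist x' y' = 1 := SimpleGraph.dist_eq_one_iff_adj.mpr hadj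
        have t1 := hconn.dist_triangle (u := x) (v := x') (w := y')
        have t2 : G.dist y' x = G.dist x y' := SimpleGraph.dist_comm
        have t3 : (G.dist y' x : ℝ) ≤ G.dist x x' + 1 := by
          have : G.dist y' x ≤ G.dist x x' + 1 := by omega
          exact_mod_cast this
        have h5 := one_step G d hd hreg hconn R ρ hρ h3 z hz y' x (by linarith)
        have := mul_le_mul_of_nonneg_left h5 (hP.nonneg x' y')
        rw [t2]
        refine le_trans (le_of_eq ?_) this
        unfold op
        rw [Finset.mul_sum]
        refine Finset.sum_congr rfl fun y _ => ?_
        ring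
      · have : P x' y' = 0 := by simp [hPd, simpleStep, hadj]
        simp [this]
    refine (Finset.sum_le_sum fun y' _ => h1 y').trans ?_
    have h6 := one_step G d hd hreg hconn R ρ hρ h3 z hz x x' (by linarith)
    have h7 := mul_le_mul_of_nonneg_left h6 hr0
    have e2 : G.dist x' x = G.dist x x' := SimpleGraph.dist_comm
    rw [e2] at h7
    calc _ = r * op P (fun w => z⁻¹ ^ (G.dist w x)) x' := by
          unfold op; rw [Finset.mul_sum]; refine Finset.sum_congr rfl fun y _ => ?_; ring
      _ ≤ _ := h7
      _ = _ := by rw [← hr]; ring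
  have hζ : 0 < z⁻¹ ^ (G.dist x x') := by positivity
  have hC : ∑ y, qi * (P x y * P x' y) ≤ (qi / d + 2 * ρ * qi * z^2 / d^2) * z⁻¹^(G.dist x x') := by
    have hsum : ∑ y, qi * (P x y * P x' y) = qi / d^2 *
        ((univ.filter fun w => G.Adj x w ∧ G.Adj x' w).card : ℝ) := by
      rw [← Finset.mul_sum]
      have : ∀ y, P x y * P x' y = if G.Adj x y ∧ G.Adj x' y then ((d:ℝ)^2)⁻¹ else 0 := by
        intro y
        simp only [hPd, simpleStep, Matrix.of_apply]
        by_cases h1 : G.Adj x y <;> by_cases h2 : G.Adj x' y <;> simp [h1, h2, sq]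
      simp only [this]
      rw [← Finset.sum_filter, Finset.sum_const, nsmul_eq_mul]
      ring
    rw [hsum]
    have hqi0 : 0 < qi := by linarith
    by_cases hxe : x = x'
    · subst hxe
      simp only [and_self, card_nbr G d hreg, SimpleGraph.dist_self, pow_zero, mul_one]
      have e : qi / (d:ℝ)^2 * d = qi / d := by field_simp
      rw [e]
      have : 0 ≤ 2 * ρ * qi * z^2 / d^2 := by positivity
      linarith
    · have hc := common_nbr G hconn R ρ hρ h3 hR x x' hxe
      by_cases hemp : (univ.filter fun w => G.Adj x w ∧ G.Adj x' w) = ∅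
      · rw [hemp]; simp; positivity
      · obtain ⟨w0, hw0⟩ := Finset.nonempty_iff_ne_empty.mpr hemp
        have hw0' : G.Adj x w0 ∧ G.Adj x' w0 := by simpa using hw0
        have hD2 : G.dist x x' ≤ 2 := by
          have h := hconn.dist_triangle (u := x) (v := w0) (w := x')
          have h1 : G.dist x w0 = 1 := SimpleGraph.dist_eq_one_iff_adj.mpr hw0'.1
          have h2 : G.dist w0 x' = 1 := SimpleGraph.dist_eq_one_iff_adj.mpr hw0'.2.symm
          omega
        have h1 : z⁻¹^2 ≤ z⁻¹ ^ (G.dist x x') :=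
          pow_le_pow_of_le_one (by positivity) (inv_le_one_of_one_le₀ hz) hD2
        have h2 : 1 ≤ z^2 * z⁻¹ ^ (G.dist x x') := by
          calc (1:ℝ) = z^2 * z⁻¹^2 := by field_simp
            _ ≤ _ := by gcongr
        calc qi / d^2 * ((univ.filter fun w => G.Adj x w ∧ G.Adj x' w).card : ℝ)
            ≤ qi / d^2 * (2 * ρ) * 1 := by rw [mul_one]; gcongr
          _ ≤ qi / d^2 * (2 * ρ) * (z^2 * z⁻¹ ^ (G.dist x x')) := by gcongr
          _ = (2 * ρ * qi * z^2 / d^2) * z⁻¹ ^ (G.dist x x') := by ring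
          _ ≤ _ := by
            gcongr
            have : 0 ≤ qi / d := by positivity
            linarith
  calc _ ≤ r^2 * z⁻¹^(G.dist x x') + (qi / d + 2 * ρ * qi * z^2 / d^2) * z⁻¹^(G.dist x x') := add_le_add hB hC
    _ = (r^2 + qi / d + 2 * ρ * qi * z^2 / d^2) * z⁻¹^(G.dist x x') := by ring
    _ ≤ _ := by gcongr

/-- one step of the potential argument -/
lemma pot_step {G : SimpleGraph V} {d : ℕ} {R ρ z qi κ : ℝ} (H : Loc G d R ρ z qi κ) (v : V) (h : ℕ)
    (hh : 2 * (h:ℝ) + 1 ≤ R) (B : (Fin (h+1) → V) → (Fin (h+1) → V) → ℝ) (hB : ∀ p p', 0 ≤ B p p')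
    (F : (Fin (h+2) → V) → (Fin (h+2) → V) → ℝ)
    (hF : ∀ p p' y y', F (Fin.snoc (α := fun _ => V) p y) (Fin.snoc (α := fun _ => V) p' y') ≤
      B p p' * (qi ^ (if y = y' then 1 else 0) * z⁻¹ ^ (G.dist y y'))) :
    PP (outK G d v) v (h+1) F ≤
      κ * PP (outK G d v) v h (fun p p' => B p p' * z⁻¹ ^ (G.dist (p (Fin.last h)) (p' (Fin.last h)))) := by
  rw [PP_snoc, ← PP_mul]
  refine PP_mono _ _ _ _ _ _ fun p p' hp hp' => ?_
  have hdist : (G.dist (p (Fin.last h)) (p' (Fin.last h)) : ℝ) + 1 ≤ R := by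
    have e1 := geo_dist hp (Fin.last h)
    have e2 := geo_dist hp' (Fin.last h)
    have t := H.hconn.dist_triangle (u := p (Fin.last h)) (v := v) (w := p' (Fin.last h))
    rw [SimpleGraph.dist_comm (v := v), e1, e2] at t
    simp only [Fin.val_last] at t
    have : (G.dist (p (Fin.last h)) (p' (Fin.last h)) : ℝ) ≤ h + h := by exact_mod_cast t
    linarith
  have hs := mul_le_mul_of_nonneg_left (pair_step H v _ _ hdist) (hB p p')
  calc _ ≤ ∑ y, ∑ y', outK G d v (p (Fin.last h)) y * outK G d v (p' (Fin.last h)) y' *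
          (B p p' * (qi ^ (if y = y' then 1 else 0) * z⁻¹ ^ (G.dist y y'))) := by
        refine Finset.sum_le_sum fun y _ => Finset.sum_le_sum fun y' _ => ?_
        exact mul_le_mul_of_nonneg_left (hF p p' y y')
          (mul_nonneg (outK_nonneg _ _ _ _ _) (outK_nonneg _ _ _ _ _))
    _ = B p p' * ∑ y, ∑ y', outK G d v (p (Fin.last h)) y * outK G d v (p' (Fin.last h)) y' *
          (qi ^ (if y = y' then 1 else 0) * z⁻¹ ^ (G.dist y y')) := by
        rw [Finset.mul_sum]; refine Finset.sum_congr rfl fun y _ => ?_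
        rw [Finset.mul_sum]; refine Finset.sum_congr rfl fun y' _ => ?_
        ring
    _ ≤ _ := hs
    _ = _ := by ring

lemma pot_bound {G : SimpleGraph V} {d : ℕ} {R ρ z qi κ : ℝ} (H : Loc G d R ρ z qi κ) (hκ0 : 0 ≤ κ)
    (v : V) (h : ℕ) (hh : 2 * (h:ℝ) ≤ R) :
    PP (outK G d v) v h (fun p p' => qi ^ co p p' * z⁻¹ ^ (G.dist (p (Fin.last h)) (p' (Fin.last h))))
      ≤ κ ^ h := by
  have hz0 : 0 < z := by linarith [H.hz]
  have hq0 : 0 < qi := by linarith [H.hqi]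
  induction h with
  | zero => unfold PP; rw [PE_zero, PE_zero]; simp [co]
  | succ h ih =>
    push_cast at hh
    refine (pot_step H v h (by linarith) (fun p p' => qi ^ co p p') (fun p p' => by positivity) _ ?_).trans ?_
    · intro p p' y y'
      simp only [co_snoc, Fin.snoc_last]
      rw [pow_add, mul_assoc]
    · rw [pow_succ']
      exact mul_le_mul_of_nonneg_left (ih (by linarith)) hκ0

/-- total second moment weight -/
lemma co_bound {G : SimpleGraph V} {d : ℕ} {R ρ z qi κ : ℝ} (H : Loc G d R ρ z qi κ) (hκ0 : 0 ≤ κ)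
    (hκ1 : κ ≤ 1/2) (v : V) (h : ℕ) (hh : 2 * (h:ℝ) ≤ R) :
    PP (outK G d v) v h (fun p p' => qi ^ co p p') ≤ mass G d v h ^ 2 + 2 * κ := by
  have hz0 : 0 < z := by linarith [H.hz]
  have hq0 : 0 < qi := by linarith [H.hqi]
  have key : ∀ h : ℕ, 2 * (h:ℝ) ≤ R → PP (outK G d v) v h (fun p p' => qi ^ co p p' - 1) ≤
      2 * κ * (1 - (1/2)^h) := by
    intro h
    induction h with
    | zero => intro _; unfold PP; rw [PE_zero, PE_zero]; simp [co]
    | succ h ih =>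
      intro hh
      push_cast at hh
      have ih' := ih (by linarith)
      have h1 : PP (outK G d v) v (h+1) (fun p p' => qi ^ co p p' - 1) ≤
          PP (outK G d v) v (h+1) (fun p p' =>
            (qi ^ co (Fin.init (α := fun _ => V) p) (Fin.init (α := fun _ => V) p') - 1)
            + qi ^ co p p' * z⁻¹ ^ (G.dist (p (Fin.last (h+1))) (p' (Fin.last (h+1))))) := by
        refine PP_mono _ _ _ _ _ _ fun p p' _ _ => ?_
        have e : co p p' = co (Fin.init (α := fun _ => V) p) (Fin.init (α := fun _ => V) p') +
            if p (Fin.last (h+1)) = p' (Fin.last (h+1)) then 1 else 0 := by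
          conv_lhs => rw [← Fin.snoc_init_self p, ← Fin.snoc_init_self p']
          exact co_snoc _ _ _ _
        set c := co (Fin.init (α := fun _ => V) p) (Fin.init (α := fun _ => V) p')
        by_cases hl : p (Fin.last (h+1)) = p' (Fin.last (h+1))
        · rw [if_pos hl] at e
          rw [hl, SimpleGraph.dist_self, pow_zero, mul_one]
          have : 1 ≤ qi ^ c := one_le_pow₀ H.hqi
          linarith
        · rw [if_neg hl, add_zero] at e
          rw [e]
          have : 0 ≤ qi ^ c * z⁻¹ ^ (G.dist (p (Fin.last (h+1))) (p' (Fin.last (h+1)))) := by positivity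
          linarith
      rw [PP_add] at h1
      have h2 := pot_bound H hκ0 v (h+1) (by push_cast; linarith)
      have h3 : PP (outK G d v) v (h+1) (fun p p' =>
            (qi ^ co (Fin.init (α := fun _ => V) p) (Fin.init (α := fun _ => V) p') - 1)) ≤
            PP (outK G d v) v h (fun p p' => qi ^ co p p' - 1) := by
        rw [PP_snoc]
        refine PP_mono _ _ _ _ _ _ fun p p' _ _ => ?_
        simp only [Fin.init_snoc]
        have h5 : 0 ≤ qi ^ co p p' - 1 := by
          have : 1 ≤ qi ^ co p p' := one_le_pow₀ H.hqi
          linarith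
        have h6 : ∑ y, ∑ y', outK G d v (p (Fin.last h)) y * outK G d v (p' (Fin.last h)) y' * (qi ^ co p p' - 1)
          = (∑ y, outK G d v (p (Fin.last h)) y) * (∑ y', outK G d v (p' (Fin.last h)) y') * (qi ^ co p p' - 1) := by
          rw [Finset.sum_mul_sum, Finset.sum_mul]
          refine Finset.sum_congr rfl fun y _ => ?_
          rw [Finset.sum_mul]
        rw [h6]
        have s1 := outsum_le G d H.hd H.hreg v (p (Fin.last h))
        have s2 := outsum_le G d H.hd H.hreg v (p' (Fin.last h))
        have s3 : 0 ≤ ∑ y', outK G d v (p' (Fin.last h)) y' := Finset.sum_nonneg fun _ _ => outK_nonneg _ _ _ _ _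
        have := mul_le_one₀ s1 s3 s2
        nlinarith
      have h7 : κ^(h+1) ≤ κ * (1/2)^h := by
        rw [pow_succ']; gcongr
      have : (1/2:ℝ)^(h+1) = (1/2) * (1/2)^h := by rw [pow_succ']
      rw [this]
      linarith
  have h8 := key h hh
  have h9 : PP (outK G d v) v h (fun p p' => qi ^ co p p') =
      PP (outK G d v) v h (fun p p' => qi ^ co p p' - 1) + PP (outK G d v) v h (fun _ _ => 1) := by
    rw [← PP_add]; simp
  rw [h9, PP_one]
  have : 0 ≤ κ * (1/2:ℝ)^h := by positivity
  nlinarith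

/-- pairs sharing the first and the last vertex -/
lemma loop_bound {G : SimpleGraph V} {d : ℕ} {R ρ z qi κ : ℝ} (H : Loc G d R ρ z qi κ) (hκ0 : 0 ≤ κ)
    (v : V) (h : ℕ) (hh : 2 * (h:ℝ) + 2 ≤ R) :
    PP (outK G d v) v (h+1) (fun p p' => qi ^ co p p' * (if p 1 = p' 1 then 1 else 0) *
      (if p (Fin.last (h+1)) = p' (Fin.last (h+1)) then 1 else 0)) ≤ qi / d * κ ^ h := by
  have hz0 : 0 < z := by linarith [H.hz]
  have hq0 : 0 < qi := by linarith [H.hqi]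
  have hdpos : (0:ℝ) < d := by exact_mod_cast H.hd
  have key : PP (outK G d v) v (h+1) (fun p p' => qi ^ co p p' * (if p 1 = p' 1 then 1 else 0) *
      z⁻¹ ^ (G.dist (p (Fin.last (h+1))) (p' (Fin.last (h+1))))) ≤ qi / d * κ ^ h := by
    induction h with
    | zero =>
      rw [PP_snoc]
      unfold PP; rw [PE_zero, PE_zero]
      have h1 : ∀ (y : V), (Fin.snoc (α := fun _ => V) (fun _ : Fin 1 => v) y : Fin 2 → V) 1 = y := fun y =>
        Fin.snoc_last (α := fun _ => V) (n := 1) y (fun _ : Fin 1 => v)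
      simp only [co_snoc, h1, Nat.reduceAdd, zero_add, Fin.snoc_last]
      have h2 : ∀ y y', outK G d v v y * outK G d v v y' *
        (qi ^ (co (fun _ : Fin 1 => v) (fun _ => v) + if y = y' then 1 else 0) * (if y = y' then 1 else 0) *
          z⁻¹ ^ (G.dist y y')) ≤ if y = y' then (d:ℝ)⁻¹ * qi * simpleStep G d v y else 0 := by
        intro y y'
        split_ifs with hyy
        · subst hyy
          simp only [co, SimpleGraph.dist_self, pow_zero, mul_one]
          simp only [Finset.univ_eq_empty, Finset.filter_empty, Finset.card_empty, zero_add, pow_one]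
          have e1 : outK G d v v y ≤ (d:ℝ)⁻¹ := by
            simp only [outK, Matrix.of_apply]; split_ifs <;> first | rfl | positivity
          have := mul_le_mul e1 (outK_le G d v v y) (outK_nonneg _ _ _ _ _) (by positivity)
          nlinarith
        · simp
      refine (Finset.sum_le_sum fun y _ => Finset.sum_le_sum fun y' _ => h2 y y').trans ?_
      simp only [Finset.sum_ite_eq, Finset.mem_univ, if_true]
      rw [← Finset.mul_sum, (simpleStep_stoch G d H.hd H.hreg).rowsum]
      simp; rw [div_eq_inv_mul]
    | succ h ih =>
      push_cast at hh
      refine (pot_step H v (h+1) (by push_cast; linarith)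
        (fun p p' => qi ^ co p p' * (if p 1 = p' 1 then 1 else 0)) (fun p p' => ?_) _ ?_).trans ?_
      · split_ifs <;> simp; positivity
      · intro p p' y y'
        have h1 : ∀ (p : Fin (h+2) → V) (y : V), (Fin.snoc (α := fun _ => V) p y : Fin (h+3) → V) 1 = p 1 :=
          fun p y => Fin.snoc_castSucc (α := fun _ => V) (n := h+2) y p 1
        simp only [co_snoc, Fin.snoc_last, h1]
        rw [pow_add]
        apply le_of_eq; ring
      · rw [pow_succ']
        have := mul_le_mul_of_nonneg_left (ih (by linarith)) hκ0
        refine this.trans (le_of_eq ?_)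
        ring
  refine le_trans (PP_mono _ _ _ _ _ _ fun p p' _ _ => ?_) key
  have : 0 ≤ qi ^ co p p' * (if p 1 = p' 1 then 1 else 0) := by split_ifs <;> simp; positivity
  refine mul_le_mul_of_nonneg_left ?_ this
  split_ifs with hl
  · rw [hl]; simp
  · positivity

/-! ### Root choice -/

lemma sum_PE_point {P : Matrix V V ℝ} (hP : SymStoch P) (g : V → ℝ) (h : ℕ) (i : Fin (h+1)) :
    ∑ v, PE P v h (fun p => g (p i)) = ∑ x, g x := by
  induction h with
  | zero =>
    refine Finset.sum_congr rfl fun v _ => ?_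
    rw [PE_zero]
  | succ h ih =>
    refine Fin.cases ?_ (fun j => ?_) i
    · refine Finset.sum_congr rfl fun v _ => ?_
      rw [PE_cons]
      simp only [Fin.cons_zero]
      have h1 : ∀ y, PE P y h (fun _ => g v) = g v := by
        intro y
        have : (fun _ : Fin (h+1) → V => g v) = fun p => g v * (fun _ => (1:ℝ)) p := by funext p; simp
        rw [this, PE_mul, PE_one _ hP.rowsum, mul_one]
      simp only [h1]
      rw [← Finset.sum_mul, hP.rowsum, one_mul]
    · have h1 : ∀ v, PE P v (h+1) (fun p => g (p j.succ)) = ∑ y, P v y * PE P y h (fun p => g (p j)) := by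
        intro v; rw [PE_cons]; simp only [Fin.cons_succ]
      simp only [h1]
      rw [Finset.sum_comm]
      simp only [← Finset.sum_mul]
      rw [← ih j]
      refine Finset.sum_congr rfl fun y _ => ?_
      have : ∑ v, P v y = 1 := by
        rw [← hP.rowsum y]; exact Finset.sum_congr rfl fun v _ => hP.symm _ _
      rw [this, one_mul]

lemma exists_root [Nonempty V] (G : SimpleGraph V) (d : ℕ) (hd : 0 < d) (hreg : G.IsRegularOfDegree d)
    (g : V → ℝ) (hg : ∀ x, 0 ≤ g x) (Lr : ℝ) (hL : ∑ x, g x = Lr) (h : ℕ) :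
    ∃ v, PE (outK G d v) v h (fun p => ∑ i : Fin h, g (p i.succ)) ≤ h * Lr / Fintype.card V := by
  have hP := simpleStep_stoch G d hd hreg
  have hN : (0:ℝ) < Fintype.card V := by exact_mod_cast Fintype.card_pos
  have h1 : ∑ v, PE (outK G d v) v h (fun p => ∑ i : Fin h, g (p i.succ)) ≤
      ∑ v : V, (h * Lr / Fintype.card V : ℝ) := by
    calc _ ≤ ∑ v, PE (simpleStep G d) v h (fun p => ∑ i : Fin h, g (p i.succ)) :=
          Finset.sum_le_sum fun v _ => PE_mono_kernel _ _ (outK_nonneg G d v) (outK_le G d v) v h _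
            (fun p => Finset.sum_nonneg fun i _ => hg _)
      _ = ∑ i : Fin h, ∑ v, PE (simpleStep G d) v h (fun p => g (p i.succ)) := by
          rw [Finset.sum_comm]
          refine Finset.sum_congr rfl fun v _ => ?_
          rw [PE_sum]
      _ = h * Lr := by simp only [sum_PE_point hP, hL]; simp
      _ = _ := by rw [Finset.sum_const, Finset.card_univ, nsmul_eq_mul]; field_simp
  obtain ⟨v, _, hv⟩ := Finset.exists_le_of_sum_le Finset.univ_nonempty h1
  exact ⟨v, hv⟩

/-! ### Deterministic inequality -/

def AvI (Vac : V → Prop) {h : ℕ} (p : Fin (h+1) → V) : ℝ := if ∀ x ∈ tl p, Vac x then 1 else 0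

lemma AvI_nonneg (Vac : V → Prop) {h : ℕ} (p : Fin (h+1) → V) : 0 ≤ AvI Vac p := by
  unfold AvI; split_ifs <;> norm_num

lemma tl_reach {G : SimpleGraph V} {v : V} {k : ℕ} {p : Fin (k+2) → V} (hp : Geo G v p)
    (S : Set V) (hS : ∀ i : Fin (k+1), p i.succ ∈ S) (i : Fin (k+1)) :
    (G.induce S).Reachable ⟨p 1, hS 0⟩ ⟨p i.succ, hS i⟩ := by
  induction i using Fin.induction with
  | zero => exact SimpleGraph.Reachable.refl _
  | succ i ih =>
    refine ih.trans (SimpleGraph.Adj.reachable ?_)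
    have := (hp.2 i.succ).1
    rw [← Fin.succ_castSucc] at this
    simpa using this

lemma endpoint_card {G : SimpleGraph V} {v a : V} {k : ℕ} (Vac : V → Prop) (K : ℝ) (hK : 0 < K)
    (hno : ∀ S : Finset V, (∀ x ∈ S, Vac x) → (G.induce (S : Set V)).Connected → (S.card : ℝ) < K) :
    ((univ.filter fun x => ∃ p : Fin (k+2) → V, Geo G v p ∧ (∀ y ∈ tl p, Vac y) ∧ p 1 = a ∧
      p (Fin.last (k+1)) = x).card : ℝ) ≤ K := by
  set E := (univ.filter fun x => ∃ p : Fin (k+2) → V, Geo G v p ∧ (∀ y ∈ tl p, Vac y) ∧ p 1 = a ∧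
      p (Fin.last (k+1)) = x) with hE
  by_cases hemp : E = ∅
  · rw [hemp]; simpa using hK.le
  set S := (univ.filter fun y => ∃ p : Fin (k+2) → V, Geo G v p ∧ (∀ y ∈ tl p, Vac y) ∧ p 1 = a ∧
      y ∈ tl p) with hSd
  have hmem : ∀ p : Fin (k+2) → V, Geo G v p → (∀ y ∈ tl p, Vac y) → p 1 = a →
      ∀ i : Fin (k+1), p i.succ ∈ (S : Set V) := by
    intro p h1 h2 h3 i
    simp only [hSd, Finset.coe_filter, Set.mem_setOf_eq, Finset.mem_univ, true_and]
    exact ⟨p, h1, h2, h3, mem_tl.mpr ⟨i, rfl⟩⟩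
  obtain ⟨x0, hx0⟩ := Finset.nonempty_iff_ne_empty.mpr hemp
  simp only [hE, Finset.mem_filter, Finset.mem_univ, true_and] at hx0
  obtain ⟨p0, h01, h02, h03, h04⟩ := hx0
  have haS : a ∈ (S : Set V) := by
    have := hmem p0 h01 h02 h03 0
    rw [← h03]; exact this
  have hreach : ∀ y : (S : Set V), (G.induce (S : Set V)).Reachable ⟨a, haS⟩ y := by
    rintro ⟨y, hy⟩
    have hy' := hy
    simp only [hSd, Finset.coe_filter, Set.mem_setOf_eq, Finset.mem_univ, true_and] at hy'
    obtain ⟨p, h1, h2, h3, h4⟩ := hy'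
    obtain ⟨i, hi⟩ := mem_tl.mp h4
    subst hi
    subst h3
    exact tl_reach h1 _ (hmem p h1 h2 rfl) i
  have hconn : (G.induce (S : Set V)).Connected := by
    haveI : Nonempty (S : Set V) := ⟨⟨a, haS⟩⟩
    exact SimpleGraph.Connected.mk fun x y => (hreach x).symm.trans (hreach y)
  have hvac : ∀ x ∈ S, Vac x := by
    intro x hx
    simp only [hSd, Finset.mem_filter, Finset.mem_univ, true_and] at hx
    obtain ⟨p, h1, h2, h3, h4⟩ := hx
    exact h2 x h4
  have hlt := hno S hvac hconn
  have hsub : E ⊆ S := by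
    intro x hx
    simp only [hE, Finset.mem_filter, Finset.mem_univ, true_and] at hx
    obtain ⟨p, h1, h2, h3, h4⟩ := hx
    have := hmem p h1 h2 h3 (Fin.last k)
    rw [Fin.succ_last, h4] at this
    exact this
  have : (E.card : ℝ) ≤ S.card := by exact_mod_cast Finset.card_le_card hsub
  linarith

lemma det_ineq (G : SimpleGraph V) (d : ℕ) (v : V) (k : ℕ) (Vac : V → Prop) (K : ℝ) (hK : 0 < K)
    (hno : ∀ S : Finset V, (∀ x ∈ S, Vac x) → (G.induce (S : Set V)).Connected → (S.card : ℝ) < K) :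
    (PE (outK G d v) v (k+1) (AvI Vac)) ^ 2 ≤
      (∑ a ∈ univ.filter (fun a => G.Adj v a), if Vac a then 1 else 0) * K *
      PP (outK G d v) v (k+1) (fun p p' => AvI Vac p * AvI Vac p' * (if p 1 = p' 1 then 1 else 0) *
        (if p (Fin.last (k+1)) = p' (Fin.last (k+1)) then 1 else 0)) := by
  set U := outK G d v with hU
  set W : V × V → (Fin (k+2) → V) → ℝ := fun b p =>
    if p 1 = b.1 ∧ p (Fin.last (k+1)) = b.2 then AvI Vac p else 0 with hW
  have hX : PE U v (k+1) (AvI Vac) = ∑ b, PE U v (k+1) (W b) := by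
    rw [← PE_sum]
    congr 1; funext p
    simp only [hW]
    rw [Finset.sum_eq_single (p 1, p (Fin.last (k+1)))]
    · simp
    · rintro ⟨b1, b2⟩ _ hne
      rw [if_neg]
      rintro ⟨h1, h2⟩
      exact hne (by rw [h1, h2])
    · simp
  have hZ : PP U v (k+1) (fun p p' => AvI Vac p * AvI Vac p' * (if p 1 = p' 1 then 1 else 0) *
        (if p (Fin.last (k+1)) = p' (Fin.last (k+1)) then 1 else 0)) = ∑ b, (PE U v (k+1) (W b))^2 := by
    have h1 : ∀ b, (PE U v (k+1) (W b))^2 = PP U v (k+1) (fun p p' => W b p * W b p') := by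
      intro b
      unfold PP
      have : (fun p => PE U v (k+1) (fun p' => W b p * W b p')) = fun p => PE U v (k+1) (W b) * W b p := by
        funext p; rw [PE_mul, mul_comm]
      rw [this, PE_mul, sq]
    simp only [h1]
    unfold PP
    rw [← PE_sum]
    congr 1; funext p
    rw [← PE_sum]
    congr 1; funext p'
    rw [Finset.sum_eq_single (p 1, p (Fin.last (k+1)))]
    · simp only [hW, and_self, if_true]
      by_cases h1 : p 1 = p' 1 <;> by_cases h2 : p (Fin.last (k+1)) = p' (Fin.last (k+1)) <;>
        simp [h1, h2, eq_comm] 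
    · rintro ⟨b1, b2⟩ _ hne
      simp only [hW]
      rw [if_neg, zero_mul]
      rintro ⟨h1, h2⟩
      exact hne (by rw [h1, h2])
    · simp
  rw [hZ, hX]
  set Ea : V → Finset V := fun a => (univ.filter fun x => ∃ p : Fin (k+2) → V, Geo G v p ∧ (∀ y ∈ tl p, Vac y) ∧ p 1 = a ∧
      p (Fin.last (k+1)) = x) with hEa
  set D : Finset (V × V) := ((univ.filter fun a => G.Adj v a).filter fun a => Vac a).sigma Ea |>.image
    (fun s => (s.1, s.2)) with hD
  have hDcard : (D.card : ℝ) ≤ (∑ a ∈ univ.filter (fun a => G.Adj v a), if Vac a then 1 else 0) * K := by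
    have h1 : D.card ≤ ∑ a ∈ ((univ.filter fun a => G.Adj v a).filter fun a => Vac a), (Ea a).card := by
      rw [← Finset.card_sigma]; exact Finset.card_image_le
    have h2 : (D.card : ℝ) ≤ ∑ a ∈ ((univ.filter fun a => G.Adj v a).filter fun a => Vac a), ((Ea a).card : ℝ) := by
      exact_mod_cast h1
    refine h2.trans ?_
    rw [← Finset.sum_filter, Finset.sum_mul]
    refine Finset.sum_le_sum fun a _ => ?_
    rw [one_mul]
    exact endpoint_card Vac K hK hno
  have hsupp : ∀ b, b ∉ D → PE U v (k+1) (W b) = 0 := by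
    rintro ⟨a, x⟩ hb
    have : PE U v (k+1) (W (a,x)) = PE U v (k+1) (fun _ => 0) := by
      refine PE_congr _ _ _ _ _ fun p hp0 hp => ?_
      have hg := geo_of G d v p hp0 hp
      simp only [hW]
      split_ifs with hc
      · unfold AvI
        rw [if_neg]
        intro hav
        apply hb
        rw [hD, Finset.mem_image]
        refine ⟨⟨a, x⟩, ?_, rfl⟩
        rw [Finset.mem_sigma]
        refine ⟨?_, ?_⟩
        · simp only [Finset.mem_filter, Finset.mem_univ, true_and]
          have h1 := (hg.2 0).1
          have e1 : p (Fin.castSucc 0) = v := hp0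
          have e2 : p (Fin.succ 0) = a := hc.1
          rw [e1, e2] at h1
          exact ⟨h1, hav a (mem_tl.mpr ⟨0, e2⟩)⟩
        · simp only [hEa, Finset.mem_filter, Finset.mem_univ, true_and]
          exact ⟨p, hg, hav, hc.1, hc.2⟩
      · rfl
    rw [this]
    unfold PE; simp
  have e1 : ∑ b, PE U v (k+1) (W b) = ∑ b ∈ D, PE U v (k+1) (W b) :=
    (Finset.sum_subset (Finset.subset_univ D) fun b _ hb => hsupp b hb).symm
  rw [e1]
  have h2 := sq_sum_le_card_mul_sum_sq (s := D) (f := fun b => PE U v (k+1) (W b))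
  refine h2.trans ?_
  refine mul_le_mul hDcard ?_ (Finset.sum_nonneg fun b _ => sq_nonneg _) ?_
  · exact Finset.sum_le_sum_of_subset_of_nonneg (Finset.subset_univ D) fun b _ _ => sq_nonneg _
  · refine mul_nonneg (Finset.sum_nonneg fun a _ => ?_) hK.le
    split_ifs <;> norm_num

/-! ### Exchange of expectations -/

lemma PE_comm (M M' : Matrix V V ℝ) (x x' : V) (t t' : ℕ) (F : (Fin (t+1) → V) → (Fin (t'+1) → V) → ℝ) :
    PE M x t (fun p => PE M' x' t' (fun p' => F p p')) = PE M' x' t' (fun p' => PE M x t (fun p => F p p')) := by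
  unfold PE
  have h1 : ∀ p : Fin (t+1) → V, (if p 0 = x then (∏ i : Fin t, M (p i.castSucc) (p i.succ)) *
      ∑ p' : Fin (t'+1) → V, (if p' 0 = x' then (∏ i : Fin t', M' (p' i.castSucc) (p' i.succ)) * F p p' else 0) else 0)
      = ∑ p' : Fin (t'+1) → V, (if p 0 = x then if p' 0 = x' then (∏ i : Fin t, M (p i.castSucc) (p i.succ)) *
        ((∏ i : Fin t', M' (p' i.castSucc) (p' i.succ)) * F p p') else 0 else 0) := by
    intro p
    split_ifs
    · rw [Finset.mul_sum]; refine Finset.sum_congr rfl fun p' _ => ?_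
      split_ifs <;> simp
    · simp
  simp only [h1]
  rw [Finset.sum_comm]
  refine Finset.sum_congr rfl fun p' _ => ?_
  split_ifs with h
  · rw [Finset.mul_sum]; refine Finset.sum_congr rfl fun p _ => ?_
    split_ifs <;> ring
  · simp

lemma PE_sub (M : Matrix V V ℝ) (x : V) (t : ℕ) (F F' : (Fin (t + 1) → V) → ℝ) :
    PE M x t (fun p => F p - F' p) = PE M x t F - PE M x t F' := by
  have : (fun p => F p - F' p) = fun p => F p + (-1) * F' p := by funext p; ring
  rw [this, PE_add, PE_mul]; ring

/-- a vertex is vacant -/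
def VacP {t : ℕ} (p : Fin (t+1) → V) (x : V) : Prop := ∀ s, p s ≠ x

lemma AvI_eq {t h : ℕ} (p : Fin (t+1) → V) (γ : Fin (h+1) → V) :
    AvI (VacP p) γ = if ∀ s, p s ∉ tl γ then 1 else 0 := by
  unfold AvI VacP
  congr 1
  apply propext
  constructor
  · intro h s hs; exact h _ hs s rfl
  · intro h x hx s hs; exact h s (hs ▸ hx)

lemma AvI_mul {t h : ℕ} (p : Fin (t+1) → V) (γ γ' : Fin (h+1) → V) :
    AvI (VacP p) γ * AvI (VacP p) γ' = if ∀ s, p s ∉ tl γ ∪ tl γ' then 1 else 0 := by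
  rw [AvI_eq, AvI_eq]
  simp only [Finset.mem_union, not_or, forall_and]
  by_cases h1 : ∀ s, p s ∉ tl γ <;> by_cases h2 : ∀ s, p s ∉ tl γ' <;> simp [h1, h2]

lemma vac_eq {t : ℕ} (p : Fin (t+1) → V) (a : V) :
    (if VacP p a then (1:ℝ) else 0) = if ∀ s, p s ∉ ({a} : Finset V) then 1 else 0 := by
  unfold VacP; simp

lemma fin_arith {m η μ σ : ℝ} (hm : 1/2 ≤ m) (hm1 : m ≤ 1) (hη0 : 0 ≤ η) (hη1 : η ≤ 1) (hμ0 : 0 ≤ μ) :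
    16 * ((1 + η) * (m^2 + 2 * σ^2)) - 32 * m * (m * (1 - η) - 2 * μ) + 16 * m^2 ≤
      16 * (3 * η + 4 * σ^2 + 4 * μ) := by
  have hm0 : 0 ≤ m := by linarith
  have hm2 : m^2 ≤ 1 := by nlinarith
  have e1 : η * m^2 ≤ η * 1 := mul_le_mul_of_nonneg_left hm2 hη0
  have e2 : η * σ^2 ≤ 1 * σ^2 := mul_le_mul_of_nonneg_right hη1 (sq_nonneg _)
  have e3 : m * μ ≤ 1 * μ := mul_le_mul_of_nonneg_right hm1 hμ0
  nlinarith

/-- the finite probability bound -/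
lemma finite_bound {G : SimpleGraph V} {d : ℕ} {R ρ z q σ : ℝ} (hσ : 0 < σ) (hσ1 : σ^2 ≤ 1/2)
    (hq : 0 < q) (H : Loc G d R ρ z q⁻¹ (σ^2)) (u v : V) (t k : ℕ) (hh : 2 * (k:ℝ) + 2 ≤ R)
    (η μ K2 : ℝ) (hη0 : 0 ≤ η) (hη1 : η ≤ 1) (hK2 : 0 < K2) (g : V → ℝ)
    (hm : 1/2 ≤ mass G d v (k+1))
    (hg : PE (outK G d v) v (k+1) (fun p => ∑ i : Fin (k+1), g (p i.succ)) ≤ μ)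
    (hμ0 : 0 ≤ μ)
    (H1 : ∀ γ γ' : Fin (k+2) → V, Geo G v γ → Geo G v γ' →
      fS (simpleStep G d) (tl γ ∪ tl γ') t u ≤ (1 + η) * q ^ (tl γ ∪ tl γ').card)
    (H2 : ∀ γ : Fin (k+2) → V, Geo G v γ →
      q ^ (k+1) * (1 - η - 2 * ∑ i : Fin (k+1), g (γ i.succ)) ≤ fS (simpleStep G d) (tl γ) t u)
    (H1a : ∀ a, fS (simpleStep G d) {a} t u ≤ (1 + η) * q) :
    1 - walkProb (simpleStep G d) u t (fun p => bigVacantComponent G p 0 (K2^2)) ≤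
      16 * (3 * η + 4 * σ^2 + 4 * μ) + 8 * K2 * σ^k := by
  have hd := H.hd
  have hreg := H.hreg
  have hdpos : (0:ℝ) < d := by exact_mod_cast hd
  have hP := simpleStep_stoch G d hd hreg
  set P := simpleStep G d with hPd
  set U := outK G d v with hU
  set m := mass G d v (k+1) with hmd
  have hm1 : m ≤ 1 := mass_le G d hd hreg v (k+1)
  set X : (Fin (t+1) → V) → ℝ := fun p => PE U v (k+1) (AvI (VacP p)) with hX
  set A : (Fin (t+1) → V) → ℝ := fun p => ∑ a ∈ univ.filter (fun a => G.Adj v a), if VacP p a then 1 else 0 with hA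
  set Z : (Fin (t+1) → V) → ℝ := fun p =>
    PP U v (k+1) (fun γ γ' => AvI (VacP p) γ * AvI (VacP p) γ' * (if γ 1 = γ' 1 then 1 else 0) *
        (if γ (Fin.last (k+1)) = γ' (Fin.last (k+1)) then 1 else 0)) with hZ
  set Qh := q ^ (k+1) with hQh
  have hQ0 : 0 < Qh := by positivity
  set τ := d * q / σ^k with hτd
  have hτ : 0 < τ := by rw [hτd]; positivity
  -- pointwise bound
  have hpt : ∀ p : Fin (t+1) → V, (1:ℝ) - (if bigVacantComponent G p 0 (K2^2) then 1 else 0) ≤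
      16 * (X p / Qh - m)^2 + 2 * K2 * (A p / τ + τ * (Z p / Qh^2)) := by
    intro p
    have hA0 : 0 ≤ A p := Finset.sum_nonneg fun a _ => by split_ifs <;> norm_num
    have hZ0 : 0 ≤ Z p := by
      refine PE_nonneg _ (outK_nonneg G d v) _ _ _ fun γ => PE_nonneg _ (outK_nonneg G d v) _ _ _ fun γ' => ?_
      have := AvI_nonneg (VacP p) γ
      have := AvI_nonneg (VacP p) γ'
      beta_reduce
      refine mul_nonneg (mul_nonneg (mul_nonneg ?_ ?_) ?_) ?_ <;> first | assumption | (split_ifs <;> norm_num)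
    have hX0 : 0 ≤ X p := PE_nonneg _ (outK_nonneg G d v) _ _ _ fun γ => AvI_nonneg _ _
    have hA1 : 0 ≤ A p / τ := by positivity
    have hZ1 : 0 ≤ τ * (Z p / Qh^2) := by positivity
    split_ifs with hb
    · have : 0 ≤ 16 * (X p / Qh - m)^2 := by positivity
      have : 0 ≤ 2 * K2 * (A p / τ + τ * (Z p / Qh^2)) := by positivity
      linarith
    · have hno : ∀ S : Finset V, (∀ x ∈ S, VacP p x) → (G.induce (S : Set V)).Connected →
          (S.card : ℝ) < K2^2 := by
        intro S h1 h2
        by_contra h3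
        push Not at h3
        exact hb ⟨S, fun v hv s _ => h1 v hv s, h2, h3⟩
      have hdet := det_ineq G d v k (VacP p) (K2^2) (by positivity) hno
      change X p ^ 2 ≤ A p * K2^2 * Z p at hdet
      rw [sub_zero]
      by_cases hc : X p / Qh < m / 2
      · have h1 : (m/2)^2 ≤ (X p / Qh - m)^2 := by
          have : m/2 ≤ m - X p / Qh := by linarith
          nlinarith
        have h2 : 1 ≤ 16 * (X p / Qh - m)^2 := by nlinarith
        have : 0 ≤ 2 * K2 * (A p / τ + τ * (Z p / Qh^2)) := by positivity
        linarith
      · push Not at hc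
        have h1 : (X p / Qh)^2 ≤ (K2 * ((A p / τ + τ * (Z p / Qh^2)) / 2))^2 := by
          have e1 : (X p / Qh)^2 ≤ K2^2 * ((A p / τ) * (τ * (Z p / Qh^2))) := by
            have : K2^2 * ((A p / τ) * (τ * (Z p / Qh^2))) = A p * K2^2 * Z p / Qh^2 := by
              field_simp
            rw [this, div_pow]; gcongr
          refine e1.trans ?_
          rw [mul_pow]
          refine mul_le_mul_of_nonneg_left ?_ (sq_nonneg _)
          nlinarith [sq_nonneg (A p / τ - τ * (Z p / Qh^2))]
        have h2 : X p / Qh ≤ K2 * ((A p / τ + τ * (Z p / Qh^2)) / 2) :=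
          le_of_sq_le_sq h1 (by positivity)
        have : 0 ≤ 16 * (X p / Qh - m)^2 := by positivity
        linarith
  -- expectations
  have hEX : PE P u t X = PE U v (k+1) (fun γ => fS P (tl γ) t u) := by
    rw [hX, PE_comm]
    congr 1; funext γ
    rw [← fS_PE]; congr 1; funext p; rw [AvI_eq]
  have hEX2 : PE P u t (fun p => X p ^ 2) = PP U v (k+1) (fun γ γ' => fS P (tl γ ∪ tl γ') t u) := by
    have h1 : ∀ p, X p ^ 2 = PE U v (k+1) (fun γ => PE U v (k+1) (fun γ' => AvI (VacP p) γ * AvI (VacP p) γ')) := by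
      intro p
      have : (fun γ : Fin (k+1+1) → V => PE U v (k+1) (fun γ' => AvI (VacP p) γ * AvI (VacP p) γ')) =
          fun γ => X p * AvI (VacP p) γ := by
        funext γ; rw [PE_mul, mul_comm]
      rw [this, PE_mul, sq]
    simp only [h1]
    rw [PE_comm]
    unfold PP
    congr 1; funext γ
    rw [PE_comm]
    congr 1; funext γ'
    beta_reduce
    rw [← fS_PE]; congr 1; funext p; rw [AvI_mul]
  have hEZ : PE P u t Z = PP U v (k+1) (fun γ γ' => fS P (tl γ ∪ tl γ') t u * ((if γ 1 = γ' 1 then 1 else 0) *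
        (if γ (Fin.last (k+1)) = γ' (Fin.last (k+1)) then 1 else 0))) := by
    rw [hZ]
    unfold PP
    rw [PE_comm]
    congr 1; funext γ
    rw [PE_comm]
    congr 1; funext γ'
    beta_reduce
    rw [← fS_PE, mul_comm, ← PE_mul]; congr 1; funext p; rw [AvI_mul]; ring
  have hEA : PE P u t A ≤ 2 * (d * q) := by
    rw [hA, PE_sum]
    calc _ = ∑ a ∈ univ.filter (fun a => G.Adj v a), fS P {a} t u := by
          refine Finset.sum_congr rfl fun a _ => ?_
          rw [← fS_PE]; congr 1; funext p; rw [vac_eq]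
      _ ≤ ∑ a ∈ univ.filter (fun a => G.Adj v a), 2 * q := by
          refine Finset.sum_le_sum fun a _ => (H1a a).trans ?_
          gcongr; linarith
      _ = _ := by rw [Finset.sum_const, card_nbr G d hreg, nsmul_eq_mul]; ring
  have hqpow : ∀ γ γ' : Fin (k+2) → V, Geo G v γ → Geo G v γ' →
      q ^ (tl γ ∪ tl γ').card = Qh^2 * q⁻¹ ^ co γ γ' := by
    intro γ γ' h1 h2
    have hc := card_tl_union h1 h2
    have : q ^ (tl γ ∪ tl γ').card * q ^ co γ γ' = Qh^2 := by
      rw [← pow_add, hc, hQh, ← pow_mul, mul_comm]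
    rw [← this, mul_assoc, ← mul_pow, mul_inv_cancel₀ hq.ne', one_pow, mul_one]
  have hκ0 : 0 ≤ σ^2 := sq_nonneg _
  have b1 : PE P u t (fun p => X p ^ 2) ≤ Qh^2 * ((1 + η) * (m^2 + 2 * σ^2)) := by
    rw [hEX2]
    have h1 : PP U v (k+1) (fun γ γ' => fS P (tl γ ∪ tl γ') t u) ≤
        PP U v (k+1) (fun γ γ' => (Qh^2 * (1+η)) * q⁻¹ ^ co γ γ') := by
      refine PP_mono _ _ _ _ _ _ fun γ γ' h1 h2 => ?_
      refine (H1 γ γ' h1 h2).trans (le_of_eq ?_)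
      rw [hqpow γ γ' h1 h2]; ring
    refine h1.trans ?_
    rw [PP_mul]
    have h2 := co_bound H hκ0 hσ1 v (k+1) (by push_cast; linarith)
    calc _ ≤ (Qh^2 * (1+η)) * (m^2 + 2 * σ^2) := by gcongr
      _ = _ := by ring
  have b2 : Qh * (m * (1 - η) - 2 * μ) ≤ PE P u t X := by
    rw [hEX]
    have h1 : PE U v (k+1) (fun γ => Qh * ((1 - η) * 1 - 2 * ∑ i : Fin (k+1), g (γ i.succ))) ≤
        PE U v (k+1) (fun γ => fS P (tl γ) t u) := by
      refine PE_mono _ (outK_nonneg G d v) _ _ _ _ fun γ h0 hγ => ?_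
      have := H2 γ (geo_of G d v γ h0 hγ)
      rw [mul_one]; exact this
    refine le_trans ?_ h1
    rw [PE_mul, PE_sub, PE_mul, PE_mul]
    refine mul_le_mul_of_nonneg_left ?_ hQ0.le
    have : PE U v (k+1) (fun _ => 1) = m := rfl
    rw [this]
    linarith
  have b3 : PE P u t Z ≤ Qh^2 * (2 * (q⁻¹ / d * (σ^2)^k)) := by
    rw [hEZ]
    have h1 : PP U v (k+1) (fun γ γ' => fS P (tl γ ∪ tl γ') t u * ((if γ 1 = γ' 1 then 1 else 0) *
        (if γ (Fin.last (k+1)) = γ' (Fin.last (k+1)) then 1 else 0))) ≤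
        PP U v (k+1) (fun γ γ' => (Qh^2 * (1+η)) * (q⁻¹ ^ co γ γ' * (if γ 1 = γ' 1 then 1 else 0) *
        (if γ (Fin.last (k+1)) = γ' (Fin.last (k+1)) then 1 else 0))) := by
      refine PP_mono _ _ _ _ _ _ fun γ γ' h1 h2 => ?_
      have h3 := H1 γ γ' h1 h2
      rw [hqpow γ γ' h1 h2] at h3
      have h4 : (0:ℝ) ≤ ((if γ 1 = γ' 1 then 1 else 0) *
        (if γ (Fin.last (k+1)) = γ' (Fin.last (k+1)) then 1 else 0)) := by
        split_ifs <;> norm_num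
      refine (mul_le_mul_of_nonneg_right h3 h4).trans (le_of_eq ?_)
      ring
    refine h1.trans ?_
    rw [PP_mul]
    have h2 := loop_bound H hκ0 v k hh
    calc _ ≤ (Qh^2 * (1+η)) * (q⁻¹ / d * (σ^2)^k) := by gcongr
      _ ≤ (Qh^2 * 2) * (q⁻¹ / d * (σ^2)^k) := by gcongr; linarith
      _ = _ := by ring
  -- assemble
  have hPone : PE P u t (fun _ => 1) = 1 := PE_one _ hP.rowsum t u
  rw [walkProb_eq]
  have hmain := PE_mono P hP.nonneg u t _ _ (fun p _ _ => hpt p)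
  rw [PE_sub, hPone] at hmain
  refine hmain.trans ?_
  have hexp : (fun p => 16 * (X p / Qh - m)^2 + 2 * K2 * (A p / τ + τ * (Z p / Qh^2))) =
      fun p => ((16 / Qh^2) * X p ^ 2 + (-(32 * m / Qh)) * X p) + (16 * m^2 * 1 +
        ((2 * K2 / τ) * A p + (2 * K2 * τ / Qh^2) * Z p)) := by
    funext p; field_simp; ring
  rw [hexp, PE_add, PE_add, PE_add, PE_add, PE_mul, PE_mul, PE_mul P u t (16 * m^2), PE_mul, PE_mul, hPone]
  have c1 : (16 / Qh^2) * PE P u t (fun p => X p ^ 2) ≤ 16 * ((1 + η) * (m^2 + 2 * σ^2)) := by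
    calc _ ≤ (16 / Qh^2) * (Qh^2 * ((1 + η) * (m^2 + 2 * σ^2))) := by gcongr
      _ = _ := by field_simp
  have c2 : (-(32 * m / Qh)) * PE P u t X ≤ -(32 * m * (m * (1 - η) - 2 * μ)) := by
    have : (32 * m / Qh) * (Qh * (m * (1 - η) - 2 * μ)) ≤ (32 * m / Qh) * PE P u t X := by
      refine mul_le_mul_of_nonneg_left b2 ?_
      have : 0 ≤ m := by linarith
      positivity
    have e : (32 * m / Qh) * (Qh * (m * (1 - η) - 2 * μ)) = 32 * m * (m * (1 - η) - 2 * μ) := by field_simp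
    linarith
  have c3 : (2 * K2 / τ) * PE P u t A ≤ 4 * K2 * σ^k := by
    calc _ ≤ (2 * K2 / τ) * (2 * (d * q)) := by gcongr
      _ = _ := by rw [hτd]; field_simp; ring
  have c4 : (2 * K2 * τ / Qh^2) * PE P u t Z ≤ 4 * K2 * σ^k := by
    calc _ ≤ (2 * K2 * τ / Qh^2) * (Qh^2 * (2 * (q⁻¹ / d * (σ^2)^k))) := by gcongr
      _ = _ := by
        have e : (σ^2)^k = σ^k*σ^k := by rw [← pow_mul, mul_comm 2 k, pow_mul]; ring
        rw [e, hτd]; field_simp; ring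
  have c5 : 16 * ((1 + η) * (m^2 + 2 * σ^2)) - 32 * m * (m * (1 - η) - 2 * μ) + 16 * m^2 ≤
      16 * (3 * η + 4 * σ^2 + 4 * μ) := by
    exact fin_arith hm hm1 hη0 hη1 hμ0
  linarith

lemma single_op {G : SimpleGraph V} (d : ℕ) (a x : V) :
    op (simpleStep G d) (ind {a}) x ≤ 6 / d := by
  rw [op_ind, Finset.sum_singleton]
  simp only [simpleStep, Matrix.of_apply]
  split_ifs
  · rw [inv_eq_one_div]; gcongr; norm_num
  · positivity

/-- finite form of the theorem with explicit numerical hypotheses -/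
lemma finite_final [Nonempty V] {G : SimpleGraph V} {d : ℕ} {R ρ z σ γ : ℝ} (u : V) (t k L : ℕ)
    (N T θ η K2 : ℝ) (hσ : 0 < σ) (hσ1 : σ^2 ≤ 1/2)
    (H : Loc G d R ρ z (Real.exp (-T))⁻¹ (σ^2))
    (hγ : 0 < γ) (hg : Gap (simpleStep G d) γ)
    (hh : 2 * (k:ℝ) + 2 ≤ R) (hR24 : 24 ≤ R)
    (hη0 : 0 ≤ η) (hη1 : η ≤ 1) (hK2 : 0 < K2)
    (hL : (Fintype.card V : ℝ) ^ 3 ≤ Real.exp ((γ / 2) * L))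
    (hN : N = Fintype.card V) (hT : T = t / N)
    (hk0N : 4 * (2 * (k:ℝ) + 2) ≤ N) (hθ0 : 0 ≤ θ) (hθ1 : θ ≤ 1)
    (hθ : (1 + 1/(d:ℝ)) * (1 + 12 * (6/(d:ℝ))) + (1 + d) * ((2 * (k:ℝ) + 2) * (z⁻¹ + ρ * R * z / d)^24 / γ)
      + (2 * (k:ℝ) + 2) / (γ * N) ≤ 1 + θ)
    (hη : Real.exp ((2 * (k:ℝ) + 2) * T * θ + (2 * (k:ℝ) + 2) * L / N) * (1 + 1/N) ≤ 1 + η)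
    (hη2 : 8 * (2 * (k:ℝ) + 2)^2 * (T+1) / N + 2 / N ≤ η)
    (hmass : ρ * ((k:ℝ)+1)^2 / d ≤ 1/2) :
    1 - walkProb (simpleStep G d) u t (fun p => bigVacantComponent G p 0 (K2^2)) ≤
      16 * (3 * η + 4 * σ^2 + 4 * (((k:ℝ)+1) * L / N)) + 8 * K2 * σ^k := by
  have hd := H.hd
  have hreg := H.hreg
  have hdpos : (0:ℝ) < d := by exact_mod_cast hd
  have hP := simpleStep_stoch G d hd hreg
  have hNpos : 0 < N := by rw [hN]; exact_mod_cast Fintype.card_pos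
  have hρ := H.hρ
  have hz := H.hz
  have hk1 : (0:ℝ) ≤ k := Nat.cast_nonneg k
  set g : V → ℝ := fun s => ∑ i ∈ Finset.range L, (lzm (simpleStep G d) ^ i) u s with hgdef
  have hg0 : ∀ x, 0 ≤ g x := fun x => Finset.sum_nonneg fun i _ => (hP.lzm.pow i).nonneg _ _
  have hgs : ∑ x, g x = L := by
    rw [hgdef, Finset.sum_comm]
    rw [Finset.sum_congr rfl (fun i _ => (hP.lzm.pow i).rowsum u)]
    simp
  have hgS : ∀ S : Finset V, ∑ i ∈ Finset.range L, op (lzm (simpleStep G d) ^ i) (ind S) u = ∑ s ∈ S, g s := by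
    intro S
    simp only [op_ind, hgdef]
    rw [Finset.sum_comm]
  obtain ⟨v, hv⟩ := exists_root G d hd hreg g hg0 L hgs (k+1)
  have hAB : ∀ S : Finset V, S.Nonempty → (S.card : ℝ) ≤ 2 * (k:ℝ) + 2 →
      (∀ x, op (simpleStep G d) (ind S) x ≤ 6 / d) →
      fS (simpleStep G d) S t u ≤ (1 + η) * Real.exp (-T) ^ S.card ∧
      Real.exp (-T) ^ S.card * (1 - η - 2 * ∑ s ∈ S, g s) ≤ fS (simpleStep G d) S t u := by
    intro S hS hc ho
    have hr00 : 0 ≤ (z⁻¹ + ρ * R * z / d)^24 := by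
      have : 0 ≤ R := by linarith
      positivity
    have h := avoid_bounds hP hγ hg S hS 12 (6/(d:ℝ)) ((z⁻¹ + ρ * R * z / d)^24) (1/(d:ℝ)) (by positivity)
      (by positivity) hr00
      (fun s _ => return_bound G d hd hreg H.hconn R ρ hρ H.h3 z hz (by linarith) 24 (by exact_mod_cast hR24) s) ho t L hL N T
      (2 * (k:ℝ) + 2) θ η hN hT hc hk0N hθ0 hθ1 (by
        rw [one_div_one_div]; push_cast; exact hθ) hη1 hη hη2 u
    rw [hgS] at h
    exact h
  have hne : ∀ γ : Fin (k+2) → V, (tl γ).Nonempty := fun γ => ⟨γ (0 : Fin (k+1)).succ, mem_tl.2 ⟨0, rfl⟩⟩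
  have hmu0 : 0 ≤ ((k:ℝ)+1) * L / N := by positivity
  refine finite_bound (z := z) (q := Real.exp (-T)) hσ hσ1 (Real.exp_pos _) H u v t k hh η (((k:ℝ)+1) * L / N) K2 hη0 hη1 hK2 g ?_ ?_ hmu0 ?_ ?_ ?_
  · have := mass_ge G d hd hreg H.hconn R ρ hρ H.h3 v (k+1) (by push_cast; linarith)
    push_cast at this
    linarith
  · rw [hN]
    refine hv.trans (le_of_eq ?_)
    push_cast; ring
  · intro γ γ' h1 h2
    refine (hAB _ ((hne γ).mono Finset.subset_union_left) ?_ (fun x => tl_op d H.hconn h1 h2 x)).1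
    have := card_tl_union h1 h2
    have h3 : (tl γ ∪ tl γ').card ≤ 2 * (k+1) := by omega
    have h4 : ((tl γ ∪ tl γ').card : ℝ) ≤ ((2 * (k+1) : ℕ) : ℝ) := by exact_mod_cast h3
    push_cast at h4; linarith
  · intro γ h1
    have hc := card_tl h1
    have := (hAB (tl γ) (hne γ) (by rw [hc]; push_cast; linarith) (fun x => by
      have := tl_op d H.hconn h1 h1 x
      rwa [Finset.union_self] at this)).2
    rw [hc] at this
    have e : ∑ s ∈ tl γ, g s = ∑ i : Fin (k+1), g (γ i.succ) := by
      unfold tl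
      rw [Finset.sum_image (fun i _ j _ hij => tl_inj h1 h1 i j hij)]
    rw [e] at this
    exact this
  · intro a
    have := (hAB {a} (Finset.singleton_nonempty a) (by rw [Finset.card_singleton]; push_cast; linarith) (single_op d a)).1
    rwa [Finset.card_singleton, pow_one] at this

lemma ar_invN {w N B l : ℝ} (hw : 1 ≤ w) (hN : 0 < N) (hl : 1 ≤ l) (hB : w^20 * l ≤ B * N) :
    1 / N ≤ B / w^20 := by
  have hw0 : 0 < w := by linarith
  rw [div_le_div_iff₀ hN (by positivity)]
  have : w^20 * 1 ≤ w^20 * l := by gcongr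
  linarith

lemma ar_logN {w N B l : ℝ} (hw : 1 ≤ w) (hN : 0 < N) (hB : w^20 * l ≤ B * N) :
    l / N ≤ B / w^20 := by
  have hw0 : 0 < w := by linarith
  rw [div_le_div_iff₀ hN (by positivity)]
  linarith

lemma ar_theta {w N B l ρ c₁ k0 r : ℝ} (hw : 1 ≤ w) (hN : 0 < N) (hl : 1 ≤ l)
    (hB : w^20 * l ≤ B * N) (hB0 : 0 < B) (hc : 0 < c₁) (hρ : 0 ≤ ρ) (hk : 0 ≤ k0) (hkw : k0 ≤ w^2)
    (hr0 : 0 ≤ r) (hr : r ≤ (1+ρ)/w) :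
    (1 + 1/w^4) * (1 + 12 * (6/w^4)) + (1 + w^4) * (k0 * r^24 / (c₁/w^12)) + k0 / ((c₁/w^12) * N)
      ≤ 1 + (145 + 2 * (1+ρ)^24/c₁ + B/c₁) / w^4 := by
  have hw0 : 0 < w := by linarith
  have hiN := ar_invN hw hN hl hB
  have hw4 : 1 ≤ w^4 := one_le_pow₀ hw
  have a1 : (1 + 1/w^4) * (1 + 12 * (6/w^4)) ≤ 1 + 145/w^4 := by
    have h1 : 1/w^4 ≤ 1 := by rw [div_le_one (by positivity)]; exact hw4
    have h0 : 0 ≤ 1/w^4 := by positivity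
    have e : (145:ℝ)/w^4 = 145 * (1/w^4) := by ring
    have e' : (6:ℝ)/w^4 = 6 * (1/w^4) := by ring
    rw [e, e']
    nlinarith
  have a2 : (1 + w^4) * (k0 * r^24 / (c₁/w^12)) ≤ (2 * (1+ρ)^24/c₁)/w^4 := by
    calc _ ≤ (w^4 + w^4) * (w^2 * ((1+ρ)/w)^24 / (c₁/w^12)) := by gcongr
      _ = (2 * (1+ρ)^24/c₁)/w^6 := by field_simp; ring
      _ ≤ _ := by
        have : w^4 ≤ w^6 := pow_le_pow_right₀ hw (by norm_num)
        gcongr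
  have a3 : k0 / ((c₁/w^12) * N) ≤ (B/c₁)/w^4 := by
    calc k0 / ((c₁/w^12) * N) = k0 * w^12/c₁ * (1/N) := by field_simp
      _ ≤ w^2 * w^12/c₁ * (B/w^20) := by gcongr
      _ = (B/c₁)/w^6 := by field_simp
      _ ≤ _ := by
        have : w^4 ≤ w^6 := pow_le_pow_right₀ hw (by norm_num)
        gcongr
  have : (145 + 2 * (1+ρ)^24/c₁ + B/c₁) / w^4 = 145/w^4 + (2 * (1+ρ)^24/c₁)/w^4 + (B/c₁)/w^4 := by ring
  rw [this]; linarith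

/-- bound on `k0 L / N` -/
lemma ar_L {w N B l c₁ k0 L : ℝ} (hw : 1 ≤ w) (hN : 0 < N) (hl : 1 ≤ l)
    (hB : w^20 * l ≤ B * N) (hB0 : 0 < B) (hc : 0 < c₁) (hk : 0 ≤ k0) (hkw : k0 ≤ w^2)
    (hL : L ≤ 6 * l / (c₁/w^12) + 1) :
    k0 * L / N ≤ (6 * B/c₁ + B)/w := by
  have hw0 : 0 < w := by linarith
  have hiN := ar_invN hw hN hl hB
  have hlN := ar_logN hw hN hB
  calc k0 * L / N ≤ k0 * (6 * l / (c₁/w^12) + 1)/N := by gcongr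
    _ = k0 * (6 * w^12 / c₁ * (l/N) + 1/N) := by field_simp
    _ ≤ w^2 * (6 * w^12 / c₁ * (B/w^20) + B/w^20) := by gcongr
    _ = (6*B/c₁)/w^6 + B/w^18 := by field_simp
    _ ≤ (6*B/c₁)/w + B/w := by
      have h1 : w ≤ w^6 := le_self_pow₀ hw (by norm_num)
      have h2 : w ≤ w^18 := le_self_pow₀ hw (by norm_num)
      gcongr
    _ = _ := by ring

lemma ar_T {w T θc k0 : ℝ} (hw : 1 ≤ w) (hT0 : 0 ≤ T) (hT : T ≤ 4 * w) (hc : 0 ≤ θc)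
    (hk : 0 ≤ k0) (hkw : k0 ≤ w^2) : k0 * T * (θc/w^4) ≤ 4 * θc / w := by
  have hw0 : 0 < w := by linarith
  calc k0 * T * (θc/w^4) ≤ w^2 * (4*w) * (θc/w^4) := by gcongr
    _ = 4 * θc/w := by field_simp

lemma ar_exp {E n η : ℝ} (hE0 : 0 ≤ E) (hE1 : E ≤ 1) (hn0 : 0 ≤ n) (hn : 2 * E + 3 * n ≤ η) :
    Real.exp E * (1 + n) ≤ 1 + η := by
  have h1 : Real.exp E ≤ 1 + 2 * E := by
    have := Real.abs_exp_sub_one_le (x := E) (by rw [abs_of_nonneg hE0]; exact hE1)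
    rw [abs_of_nonneg hE0] at this
    have := le_abs_self (Real.exp E - 1)
    linarith
  calc Real.exp E * (1+n) ≤ (1 + 2 * E) * (1+n) := by gcongr
    _ ≤ 1 + η := by nlinarith

lemma ar_eta2 {w N B l T k0 : ℝ} (hw : 1 ≤ w) (hN : 0 < N) (hl : 1 ≤ l)
    (hB : w^20 * l ≤ B * N) (hB0 : 0 < B) (hk : 0 ≤ k0) (hkw : k0 ≤ w^2) (hT0 : 0 ≤ T) (hT : T ≤ 4 * w) :
    8 * k0^2 * (T+1)/N + 2/N ≤ 42 * B / w := by
  have hw0 : 0 < w := by linarith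
  have hiN := ar_invN hw hN hl hB
  calc 8 * k0^2 * (T+1)/N + 2/N = (8 * k0^2 * (T+1) + 2) * (1/N) := by ring
    _ ≤ (8 * (w^2)^2 * (4*w+w) + 2 * w^5) * (B/w^20) := by
      have : 1 ≤ w^5 := one_le_pow₀ hw
      gcongr
      linarith
    _ = 42 * B/w^15 := by field_simp; ring
    _ ≤ _ := by
      have h2 : w ≤ w^15 := le_self_pow₀ hw (by norm_num)
      gcongr

lemma ar_kappa {w D ρ r qi C : ℝ} (hw : 1 ≤ w) (hD : 1 ≤ D) (hDw : D ≤ w^2) (hρ : 0 ≤ ρ)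
    (hr0 : 0 ≤ r) (hr : r ≤ (1+ρ)/w) (hq0 : 0 ≤ qi) (hq : qi ≤ w^4/D^2) :
    r^2 + qi/w^4 + 2*ρ*qi*w^2/(w^4)^2 ≤ ((1+ρ)^2 + 1 + 2*ρ)/D := by
  have hw0 : 0 < w := by linarith
  have hD0 : 0 < D := by linarith
  have hDD : D ≤ D^2 := le_self_pow₀ hD (by norm_num)
  have a1 : r^2 ≤ (1+ρ)^2/D := by
    calc r^2 ≤ ((1+ρ)/w)^2 := by gcongr
      _ = (1+ρ)^2/w^2 := by rw [div_pow]
      _ ≤ _ := by gcongr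
  have a2 : qi/w^4 ≤ 1/D := by
    calc qi/w^4 ≤ (w^4/D^2)/w^4 := by gcongr
      _ = 1/D^2 := by field_simp
      _ ≤ _ := by gcongr
  have a3 : 2*ρ*qi*w^2/(w^4)^2 ≤ 2*ρ/D := by
    calc 2*ρ*qi*w^2/(w^4)^2 ≤ 2*ρ*(w^4/D^2)*w^2/(w^4)^2 := by gcongr
      _ = 2*ρ/(D^2 * w^2) := by field_simp
      _ ≤ _ := by
        have : 1 ≤ w^2 := one_le_pow₀ hw
        have : D ≤ D^2 * w^2 := by nlinarith
        gcongr
  have : ((1+ρ)^2 + 1 + 2*ρ)/D = (1+ρ)^2/D + 1/D + 2*ρ/D := by ring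
  linarith

lemma ar_r {w D ρ : ℝ} (hw : 1 ≤ w) (hDw : D ≤ w^2) (hρ : 0 ≤ ρ) :
    w⁻¹ + ρ * D * w / w^4 ≤ (1+ρ)/w := by
  have hw0 : 0 < w := by linarith
  calc w⁻¹ + ρ * D * w / w^4 ≤ w⁻¹ + ρ * w^2 * w / w^4 := by gcongr
    _ = (1+ρ)/w := by field_simp

lemma ar_sigma {D c σ : ℝ} {k : ℕ} (hσ0 : 0 < σ) (hσ : σ ≤ Real.exp (-1)) (hk : c * D ≤ k + 1) :
    Real.exp (c * D/2) * σ^k ≤ Real.exp (1 - c/2 * D) := by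
  calc Real.exp (c * D/2) * σ^k ≤ Real.exp (c*D/2) * Real.exp (-1)^k := by gcongr
    _ = Real.exp (c*D/2 - k) := by rw [← Real.exp_nat_mul, ← Real.exp_add]; congr 1; ring
    _ ≤ _ := by rw [Real.exp_le_exp]; linarith

set_option maxHeartbeats 1000000 in
/-- quantitative bound for a single graph -/
lemma det_final [Nonempty V] {G : SimpleGraph V} {d : ℕ} (hd1 : 1 ≤ d) (hreg : G.IsRegularOfDegree d)
    (hconn : G.Connected) {ρ c₁ ρ₁ B ε N l D w Cθ CL Cη Cs c : ℝ} (hρ : 0 ≤ ρ) (hc₁ : 0 < c₁) (hB0 : 0 < B)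
    (hρ₁ : ρ₁ ≤ 3) (hsp : SpectralGapLB G d (c₁ / (d:ℝ)^ρ₁)) (hε0 : 0 < ε) (hε1 : ε < 1)
    (h3 : PropP3 G d ε ρ) (hN : N = Fintype.card V) (hl : l = Real.log N) (hl1 : 1 ≤ l)
    (hB : (d:ℝ)^5 * l ≤ B * N) (u : V) (t : ℕ) (ht : (t:ℝ) ≤ (1-ε) * (N * Real.log d))
    (hD : D = (d:ℝ)^(ε/2)) (hw : w = (d:ℝ)^((1:ℝ)/4))
    (hCθ : Cθ = 145 + 2 * (1+ρ)^24/c₁ + B/c₁) (hCL : CL = 6 * B/c₁ + B)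
    (hCη : Cη = 2 * (4 * Cθ + CL) + 45 * B) (hCs : Cs = (1+ρ)^2 + 1 + 2 * ρ) (hc : c = 1/(4 * (1+ρ)))
    (g1 : 24 ≤ D) (g2 : Real.exp 2 * Cs ≤ D) (g3 : 4 * (1+ρ) ≤ D) (g4 : Cθ ≤ w) (g5 : Cη ≤ w)
    (g6 : 4 * B ≤ w) :
    1 - walkProb (simpleStep G d) u t (fun p => bigVacantComponent G p 0 (Real.exp (c * D))) ≤
      16 * (3 * (Cη / w) + 4 * (Cs / D) + 4 * (CL / w)) + 8 * Real.exp (1 - c/2 * D) := by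
  have hdr1 : (1:ℝ) ≤ d := by exact_mod_cast hd1
  have hdr0 : (0:ℝ) < d := by linarith
  have hw4 : (d:ℝ) = w^4 := by
    rw [hw, ← Real.rpow_natCast, ← Real.rpow_mul hdr0.le]; norm_num
  have hw1 : 1 ≤ w := by rw [hw]; exact Real.one_le_rpow hdr1 (by norm_num)
  have hw0 : 0 < w := by linarith
  have hD0 : 0 < D := by linarith
  have hD2 : D^2 = (d:ℝ)^ε := by
    rw [hD, ← Real.rpow_natCast, ← Real.rpow_mul hdr0.le]; congr 1; push_cast; ring
  have hDw : D ≤ w^2 := by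
    have : w^2 = (d:ℝ)^((1:ℝ)/2) := by
      rw [hw, ← Real.rpow_natCast, ← Real.rpow_mul hdr0.le]; norm_num
    rw [this, hD]
    exact Real.rpow_le_rpow_of_exponent_le hdr1 (by linarith)
  have hDle : D ≤ (d:ℝ)^ε := by rw [← hD2]; exact le_self_pow₀ (by linarith) (by norm_num)
  have hNpos : 0 < N := by rw [hN]; exact_mod_cast Fintype.card_pos
  have hB' : w^20 * l ≤ B * N := by
    have : w^20 = (d:ℝ)^5 := by rw [hw4]; ring
    rw [this]; exact hB
  have hlogd : 0 ≤ Real.log d := Real.log_nonneg hdr1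
  set T : ℝ := t / N with hT
  have hT0 : 0 ≤ T := by positivity
  have hT1 : T ≤ (1-ε) * Real.log d := by
    rw [hT, div_le_iff₀ hNpos]; linarith
  have hT2 : T ≤ 4 * w := by
    have e : Real.log d = 4 * Real.log w := by rw [hw4, Real.log_pow]; norm_num
    have := Real.log_le_self hw0.le
    have : (1-ε) * Real.log d ≤ 1 * Real.log d := by gcongr; linarith
    linarith
  have hqi : (Real.exp (-T))⁻¹ ≤ w^4/D^2 := by
    rw [← Real.exp_neg, neg_neg]
    calc Real.exp T ≤ Real.exp (Real.log d * (1-ε)) := by rw [Real.exp_le_exp]; linarith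
      _ = (d:ℝ)^(1-ε) := by rw [Real.rpow_def_of_pos hdr0]
      _ = (d:ℝ)/(d:ℝ)^ε := by rw [Real.rpow_sub hdr0, Real.rpow_one]
      _ = _ := by rw [hD2, hw4]
  have hqi1 : 1 ≤ (Real.exp (-T))⁻¹ := by
    rw [← Real.exp_neg, neg_neg]; exact Real.one_le_exp hT0
  have hrr : w⁻¹ + ρ * D * w / w^4 ≤ (1+ρ)/w := ar_r hw1 hDw hρ
  have hr0 : 0 ≤ w⁻¹ + ρ * D * w / w^4 := by positivity
  have hCs0 : 0 < Cs := by rw [hCs]; positivity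
  set σ : ℝ := Real.sqrt (Cs / D) with hσ
  have hσ0 : 0 < σ := Real.sqrt_pos.2 (by positivity)
  have hσ2 : σ^2 = Cs / D := Real.sq_sqrt (by positivity)
  have hσe : σ^2 ≤ Real.exp (-1)^2 := by
    rw [hσ2, div_le_iff₀ hD0, ← Real.exp_nat_mul]
    have e : Real.exp ((2:ℕ) * (-1:ℝ)) * Real.exp 2 = 1 := by
      rw [← Real.exp_add]; norm_num
    calc Cs = Real.exp ((2:ℕ) * (-1:ℝ)) * (Real.exp 2 * Cs) := by rw [← mul_assoc, e, one_mul]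
      _ ≤ _ := by gcongr
  have hσ1 : σ ≤ Real.exp (-1) := le_of_sq_le_sq hσe (Real.exp_pos _).le
  have he1 : Real.exp (-1) ≤ 1/2 := by
    rw [Real.exp_neg, inv_eq_one_div]
    have : (2:ℝ) ≤ Real.exp 1 := by have := Real.add_one_le_exp (1:ℝ); linarith
    gcongr
  have hσh : σ^2 ≤ 1/2 := by
    have : σ ≤ 1/2 := hσ1.trans he1
    calc σ^2 ≤ (1/2)^2 := by gcongr
      _ ≤ 1/2 := by norm_num
  have hloc : Loc G d D ρ w (Real.exp (-T))⁻¹ (σ^2) := by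
    refine ⟨hd1, hreg, hconn, hρ, ?_, hw1, by linarith, hqi1, ?_⟩
    · intro a y hay
      exact h3 a y (hay.trans hDle)
    · rw [hσ2, hw4, hCs]
      exact ar_kappa (C := 0) hw1 (by linarith) hDw hρ hr0 hrr (by linarith) hqi
  have hcpos : 0 < c := by rw [hc]; positivity
  have hcρ : c * (4 * (1+ρ)) = 1 := by rw [hc]; field_simp
  have hc4 : c ≤ 1/4 := by
    have := mul_nonneg hcpos.le hρ
    linarith
  have hcD : 1 ≤ c * D := by rw [← hcρ]; gcongr
  set k : ℕ := ⌊c * D⌋₊ with hk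
  have hk1 : (k:ℝ) ≤ c * D := Nat.floor_le (by positivity)
  have hk2 : c * D < k + 1 := Nat.lt_floor_add_one _
  have hk0 : (0:ℝ) ≤ k := Nat.cast_nonneg _
  clear_value k
  have hk3 : 2 * (k:ℝ) + 2 ≤ D := by
    have : c * D ≤ 1/4 * D := by gcongr
    linarith
  have hk4 : 2 * (k:ℝ) + 2 ≤ w^2 := hk3.trans hDw
  have hmass : ρ * ((k:ℝ)+1)^2 / d ≤ 1/2 := by
    have hDd : D^2 ≤ d := by
      rw [hw4]
      calc D^2 ≤ (w^2)^2 := by gcongr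
        _ = _ := by ring
    rw [div_le_iff₀ hdr0]
    have h1 : (k:ℝ)+1 ≤ 2 * (c * D) := by linarith
    calc ρ * ((k:ℝ)+1)^2 ≤ ρ * (2 * (c * D))^2 := by gcongr
      _ = (c * (4 * ρ)) * c * D^2 := by ring
      _ ≤ 1 * (1/4) * D^2 := by
        have : c * (4 * ρ) ≤ 1 := by rw [← hcρ]; gcongr; linarith
        gcongr
      _ ≤ 1/2 * d := by linarith
  set γ : ℝ := c₁/w^12 with hγ
  have hγ0 : 0 < γ := by positivity
  have hgap : Gap (simpleStep G d) γ := by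
    refine gap_of_spectral G d _ γ hsp ?_
    have h1 : (d:ℝ)^ρ₁ ≤ w^12 := by
      calc (d:ℝ)^ρ₁ ≤ (d:ℝ)^(3:ℝ) := Real.rpow_le_rpow_of_exponent_le hdr1 hρ₁
        _ = (d:ℝ)^3 := by exact_mod_cast Real.rpow_natCast (d:ℝ) 3
        _ = w^12 := by rw [hw4]; ring
    have hp : 0 < (d:ℝ)^ρ₁ := Real.rpow_pos_of_pos hdr0 _
    have h2 : γ ≤ c₁ / (d:ℝ)^ρ₁ := by rw [hγ]; gcongr
    have h3 : 0 ≤ c₁ / (d:ℝ)^ρ₁ := by positivity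
    linarith
  set L : ℕ := ⌈6 * l / γ⌉₊ with hL
  have hL1 : 6 * l / γ ≤ L := Nat.le_ceil _
  have hL2 : (L:ℝ) ≤ 6 * l / γ + 1 := (Nat.ceil_lt_add_one (by positivity)).le
  clear_value L
  have hLexp : (Fintype.card V : ℝ)^3 ≤ Real.exp ((γ/2) * L) := by
    rw [← hN]
    have : N^3 = Real.exp (3 * l) := by
      rw [hl, ← Real.exp_log (by positivity : 0 < N^3), Real.log_pow]; norm_num
    rw [this, Real.exp_le_exp]
    rw [div_le_iff₀ hγ0] at hL1
    linarith
  have hCθ0 : 0 < Cθ := by rw [hCθ]; positivity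
  have hCL0 : 0 < CL := by rw [hCL]; positivity
  have hk0' : 0 ≤ 2 * (k:ℝ) + 2 := by linarith
  have hθ := ar_theta (k0 := 2 * (k:ℝ) + 2) hw1 hNpos hl1 hB' hB0 hc₁ hρ hk0' hk4 hr0 hrr
  have hLN := ar_L (k0 := 2 * (k:ℝ) + 2) (L := L) hw1 hNpos hl1 hB' hB0 hc₁ hk0' hk4 hL2
  have hTT := ar_T (k0 := 2 * (k:ℝ) + 2) hw1 hT0 hT2 hCθ0.le hk0' hk4
  have hE2 := ar_eta2 (k0 := 2 * (k:ℝ) + 2) hw1 hNpos hl1 hB' hB0 hk0' hk4 hT0 hT2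
  have hiN := ar_invN hw1 hNpos hl1 hB'
  rw [← hCθ] at hθ
  rw [← hCL] at hLN
  have hw4' : w ≤ w^4 := le_self_pow₀ hw1 (by norm_num)
  have hiN' : 1/N ≤ B/w := by
    have : w ≤ w^20 := le_self_pow₀ hw1 (by norm_num)
    refine hiN.trans ?_
    gcongr
  have hη : Real.exp ((2 * (k:ℝ) + 2) * T * (Cθ/w^4) + (2 * (k:ℝ) + 2) * L / N) * (1 + 1/N) ≤ 1 + Cη/w := by
    have e1 : (4 * Cθ + CL)/w = 4 * Cθ/w + CL/w := by ring
    have e2 : Cη/w = 2 * ((4 * Cθ + CL)/w) + 45 * (B/w) := by rw [hCη]; ring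
    have h0 : 0 ≤ B/w := by positivity
    refine ar_exp (by positivity) ?_ (by positivity) ?_
    · have : (4 * Cθ + CL)/w ≤ 1 := by rw [div_le_one hw0]; linarith
      linarith
    · linarith
  have hη2 : 8 * (2 * (k:ℝ) + 2)^2 * (T+1) / N + 2 / N ≤ Cη / w := by
    refine hE2.trans ?_
    have : 42 * B ≤ Cη := by linarith
    gcongr
  have h4k : 4 * (2 * (k:ℝ) + 2) ≤ N := by
    have h1 : 4 * w^2 * B ≤ N * B := by
      calc 4 * w^2 * B = w^2 * (4 * B) := by ring
        _ ≤ w^2 * w := by gcongr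
        _ = w^3 := by ring
        _ ≤ w^20 := pow_le_pow_right₀ hw1 (by norm_num)
        _ ≤ w^20 * l := le_mul_of_one_le_right (by positivity) hl1
        _ ≤ N * B := by linarith
    have := le_of_mul_le_mul_right h1 hB0
    linarith
  have hCη0 : 0 < Cη := by linarith
  have hfin := finite_final (K2 := Real.exp (c * D/2)) u t k L N T (Cθ/w^4) (Cη/w) hσ0 hσh hloc hγ0 hgap hk3 g1
    (by positivity) (by rw [div_le_one hw0]; exact g5) (Real.exp_pos _) hLexp hN hT h4k (by positivity)
    (by rw [div_le_one (by positivity)]; linarith) (by rw [hw4]; exact hθ) hη hη2 hmass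
  have hK : Real.exp (c * D/2)^2 = Real.exp (c * D) := by
    rw [← Real.exp_nat_mul]; congr 1; push_cast; ring
  rw [hK] at hfin
  refine hfin.trans ?_
  have hs := ar_sigma (c := c) (D := D) hσ0 hσ1 hk2.le
  have hμ : ((k:ℝ)+1) * L / N ≤ CL / w := by
    refine le_trans ?_ hLN
    have : (k:ℝ)+1 ≤ 2 * (k:ℝ) + 2 := by linarith
    rw [div_le_div_iff_of_pos_right hNpos]
    exact mul_le_mul_of_nonneg_right this (Nat.cast_nonneg _)
  rw [hσ2]
  linarith

/-- **Theorem 1(a)**: for a sequence of connected `d`-regular graphs satisfying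
P1–P4, if `t ≤ (1-ε) n ln d` then w.h.p. the vacant set of the first `t` steps
of the simple random walk induces a component of at least `exp(c d^(ε/2))`
vertices.  (The `n`-th graph of the sequence has `n + 1` vertices.) -/
theorem vacant_set_supercritical
    (G : ∀ n : ℕ, SimpleGraph (Fin (n + 1))) (d : ℕ → ℕ) (ε : ℕ → ℝ)
    (u : ∀ n : ℕ, Fin (n + 1)) (t : ℕ → ℕ)
    (hreg : ∀ n, (G n).IsRegularOfDegree (d n))
    (hconn : ∀ n, (G n).Connected)
    (hd : Tendsto (fun n => (d n : ℝ)) atTop atTop)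
    (hε : ∀ n, 0 < ε n ∧ ε n < 1)
    (hεd : Tendsto (fun n => ε n * Real.log (d n)) atTop atTop)
    (hP1 : ∃ c₁ ρ₁ : ℝ, 0 < c₁ ∧ 0 < ρ₁ ∧ ρ₁ ≤ 3 ∧
      ∀ n, SpectralGapLB (G n) (d n) (c₁ / (d n : ℝ) ^ ρ₁))
    (hP2a : Tendsto (fun n : ℕ => Real.log (Real.log ((n : ℝ) + 1)) ^ (2 / ε n) / (d n : ℝ))
      atTop (nhds 0))
    (hP2b : ∃ c₂ : ℝ, 0 < c₂ ∧ ∀ n, 1 ≤ n →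
      (d n : ℝ) ≤ c₂ * (((n : ℝ) + 1) / Real.log ((n : ℝ) + 1)) ^ ((1 : ℝ) / 5))
    (hP3 : ∃ ρ₂ : ℝ, 0 < ρ₂ ∧ ∀ n, PropP3 (G n) (d n) (ε n) ρ₂)
    (hP4 : ∀ δ : ℝ, 0 < δ → ∃ δ' : ℝ, 0 < δ' ∧ ∃ n₀ : ℕ, ∀ n, n₀ ≤ n →
      ∀ S : Finset (Fin (n + 1)), (S.card : ℝ) ≤ δ' * Real.log ((n : ℝ) + 1) →
        (edgesInside (G n) S : ℝ) ≤ δ * (d n : ℝ) * (S.card : ℝ))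
    (ht : ∀ n, (t n : ℝ) ≤ (1 - ε n) * (((n : ℝ) + 1) * Real.log (d n))) :
    ∃ c : ℝ, 0 < c ∧
      Tendsto (fun n =>
        walkProb (simpleStep (G n) (d n)) (u n) (t n)
          (fun p => bigVacantComponent (G n) p 0 (Real.exp (c * (d n : ℝ) ^ (ε n / 2)))))
        atTop (nhds 1) := by
  obtain ⟨c₁, ρ₁, hc₁, hρ₁0, hρ₁, hsp⟩ := hP1
  obtain ⟨c₂, hc₂, hd2⟩ := hP2b
  obtain ⟨ρ, hρ, h3⟩ := hP3
  set B : ℝ := c₂^5 with hBdef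
  have hB0 : 0 < B := by positivity
  obtain ⟨Cθ, hCθ⟩ : ∃ x : ℝ, x = 145 + 2 * (1+ρ)^24/c₁ + B/c₁ := ⟨_, rfl⟩
  obtain ⟨CL, hCL⟩ : ∃ x : ℝ, x = 6 * B/c₁ + B := ⟨_, rfl⟩
  obtain ⟨Cη, hCη⟩ : ∃ x : ℝ, x = 2 * (4 * Cθ + CL) + 45 * B := ⟨_, rfl⟩
  obtain ⟨Cs, hCs⟩ : ∃ x : ℝ, x = (1+ρ)^2 + 1 + 2 * ρ := ⟨_, rfl⟩
  obtain ⟨c, hc⟩ : ∃ x : ℝ, x = 1/(4 * (1+ρ)) := ⟨_, rfl⟩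
  have hc0 : 0 < c := by rw [hc]; positivity
  refine ⟨c, hc0, ?_⟩
  have hd1 : ∀ᶠ n in atTop, (1:ℝ) ≤ d n := hd.eventually_ge_atTop 1
  have hDt : Tendsto (fun n => (d n : ℝ) ^ (ε n / 2)) atTop atTop := by
    have h1 : Tendsto (fun n => Real.exp (ε n * Real.log (d n) * (1/2))) atTop atTop :=
      Real.tendsto_exp_atTop.comp (hεd.atTop_mul_const (by norm_num))
    refine h1.congr' ?_
    filter_upwards [hd1] with n hn
    rw [Real.rpow_def_of_pos (by linarith)]
    congr 1; ring
  have hwt : Tendsto (fun n => (d n : ℝ) ^ ((1:ℝ)/4)) atTop atTop :=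
    (tendsto_rpow_atTop (by norm_num)).comp hd
  have hlN : Tendsto (fun n : ℕ => Real.log ((n:ℝ)+1)) atTop atTop :=
    Real.tendsto_log_atTop.comp (tendsto_atTop_add_const_right _ _ tendsto_natCast_atTop_atTop)
  have hub : ∀ n, walkProb (simpleStep (G n) (d n)) (u n) (t n)
      (fun p => bigVacantComponent (G n) p 0 (Real.exp (c * (d n : ℝ) ^ (ε n / 2)))) ≤ 1 ∨ d n = 0 := by
    intro n
    by_cases h0 : d n = 0
    · right; exact h0
    left
    have hP := simpleStep_stoch (G n) (d n) (Nat.pos_of_ne_zero h0) (hreg n)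
    rw [walkProb_eq]
    refine le_trans ?_ (PE_one _ hP.rowsum (t n) (u n)).le
    refine PE_mono _ hP.nonneg _ _ _ _ fun p _ _ => ?_
    split_ifs <;> norm_num
  have herr : Tendsto (fun n => 1 - (16 * (3 * (Cη / (d n : ℝ) ^ ((1:ℝ)/4)) + 4 * (Cs / (d n : ℝ) ^ (ε n / 2)) +
      4 * (CL / (d n : ℝ) ^ ((1:ℝ)/4))) + 8 * Real.exp (1 - c/2 * (d n : ℝ) ^ (ε n / 2)))) atTop (nhds 1) := by
    have e1 := (hwt.const_div_atTop Cη).const_mul 3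
    have e2 := (hDt.const_div_atTop Cs).const_mul 4
    have e3 := (hwt.const_div_atTop CL).const_mul 4
    have e4 : Tendsto (fun n => Real.exp (1 - c/2 * (d n : ℝ) ^ (ε n / 2))) atTop (nhds 0) := by
      refine Real.tendsto_exp_atBot.comp ?_
      have h1 : Tendsto (fun n => -(c/2 * (d n : ℝ) ^ (ε n / 2))) atTop atBot :=
        tendsto_neg_atTop_atBot.comp (hDt.const_mul_atTop (by positivity))
      have h2 := tendsto_atBot_add_const_left atTop (1:ℝ) h1
      refine h2.congr fun n => ?_
      ring
    have e5 := ((((e1.add e2).add e3).const_mul 16).add (e4.const_mul 8)).const_sub 1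
    simpa using e5
  refine tendsto_of_tendsto_of_tendsto_of_le_of_le' herr tendsto_const_nhds ?_ ?_
  · filter_upwards [hd1, hlN.eventually_ge_atTop 1, eventually_ge_atTop 1, hDt.eventually_ge_atTop 24,
      hDt.eventually_ge_atTop (Real.exp 2 * Cs), hDt.eventually_ge_atTop (4 * (1+ρ)),
      hwt.eventually_ge_atTop Cθ, hwt.eventually_ge_atTop Cη, hwt.eventually_ge_atTop (4 * B)]
      with n h1 hl1 hn1 g1 g2 g3 g4 g5 g6
    have hdB : (d n : ℝ)^5 * Real.log ((n:ℝ)+1) ≤ B * ((n:ℝ)+1) := by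
      have hl0 : 0 < Real.log ((n:ℝ)+1) := by linarith
      have hx : 0 ≤ ((n : ℝ) + 1) / Real.log ((n : ℝ) + 1) := by positivity
      have h2 : (d n : ℝ)^5 ≤ B * (((n : ℝ) + 1) / Real.log ((n : ℝ) + 1)) := by
        calc (d n : ℝ)^5 ≤ (c₂ * (((n : ℝ) + 1) / Real.log ((n : ℝ) + 1)) ^ ((1 : ℝ) / 5))^5 :=
              pow_le_pow_left₀ (by positivity) (hd2 n hn1) 5
          _ = _ := by
            rw [mul_pow, ← Real.rpow_natCast (_ ^ ((1:ℝ)/5)), ← Real.rpow_mul hx]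
            norm_num [hBdef]
      calc _ ≤ B * (((n : ℝ) + 1) / Real.log ((n : ℝ) + 1)) * Real.log ((n:ℝ)+1) := by gcongr
        _ = _ := by field_simp
    have := det_final (by exact_mod_cast h1) (hreg n) (hconn n) hρ.le hc₁ hB0 hρ₁ (hsp n) (hε n).1 (hε n).2
      (h3 n) (N := (n:ℝ)+1) (by simp) rfl hl1 hdB (u n) (t n) (ht n) rfl rfl hCθ hCL hCη hCs hc g1 g2 g3 g4 g5 g6
    linarith
  · filter_upwards [hd1] with n h1
    rcases hub n with h | h
    · exact h
    · rw [h] at h1; norm_num at h1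


end
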